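/- arXiv:1809.10354 — 2 statements merged into one kernel-verified Lean document; each statement's English description precedes it below -/
import Mathlib

section
/- Let n ≥ 1, p ∈ [1,∞), r ∈ ℕ, and μ₀ > 0. Let 𝒯 be a finite simplicial complex in ℝ^n which is face-connected, in which every simplex is a face of an n-dimensional simplex, whose every simplex has shape measure at most μ₀, and let Ω be the interior of the union of the simplices of 𝒯. Then there exists a constant C > 0, depending only on n, p, r and μ₀, such that for every continuously differentiable function v on a neighborhood of the closure of Ω: the infimum, over all continuous functions w on the closure of Ω whose restriction to each n-simplex T ∈ 𝒯 is a polynomial of total degree ≤ r, of ( Σ_{T ∈ 𝒯, dim T = n} ∫_T ‖∇v − ∇w‖^p dx )^{1/p} is at most C times ( Σ_{T ∈ 𝒯, dim T = n} inf over polynomials q of total degree ≤ r of ∫_T ‖∇v − ∇q‖^p dx )^{1/p}. In other words, the best approximation error of v in the broken W^{1,p} seminorm by continuous piecewise polynomials is equivalent, up to a constant, to the best approximation error by fully discontinuous piecewise polynomials. -/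
/-!
The estimate is a quasi-interpolation of Scott–Zhang type, written in barycentric coordinates.

On an `n`-simplex `T`, a polynomial of degree at most `r` is a form of degree `r` in the barycentric
coordinates.  The barycentric coordinates of two simplices of a complex agree on their intersection,
where only the monomials in the common vertices survive.  So a single form `Q` in variables indexed
by all points of space, evaluated in the barycentric coordinates of each simplex, is a continuous
piecewise polynomial.  It remains to choose the coefficients of `Q` close to those of the given
discontinuous piecewise polynomial `P T`.

A constant is added to `P T` so that `v - P T` satisfies a Poincaré inequality on `T`.  If two
simplices share a facet, the trace inequality on the facet and the equivalence of norms on forms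
bound the jump of the coefficients belonging to that facet by the diameter of `T` times the mean of
`‖∇(v - P T)‖`, summed over the two simplices.  The trace of `v` itself drops out because `v` is
single-valued.  For `n ≥ 2`, simplices containing a common face have comparable diameters and their
number is bounded, by shape regularity; face-connectedness joins any two of them by a chain of such
jumps, so that the coefficient of `Q` can be taken from any of them.  For `n = 1`, neighbouring
intervals need not be of comparable size; there the coefficient at a vertex is the value of `v`.

Gradients of barycentric coordinates are at most a multiple of the inverse diameter, so the diameter
cancels in the gradient of `P T - Q`, and summation over patches of bounded overlap gives the
estimate for globally `C¹` functions.  A cut-off function reduces the general case to this one, and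
a sequence of almost optimal `P T` gives the infimum.
-/

open MeasureTheory
open scoped Classical

/-- A finite simplicial complex is *face-connected* if, whenever two
`n`-dimensional simplices `S, T` intersect, one can traverse from `S` to `T`
through a chain of `n`-dimensional simplices in which consecutive simplices meet
in a common facet containing `S ∩ T`. -/
def FaceConnected (n : ℕ)
    (K : Geometry.SimplicialComplex ℝ (EuclideanSpace ℝ (Fin n))) : Prop :=
  ∀ S T : Finset (EuclideanSpace ℝ (Fin n)),
    S ∈ K.faces → T ∈ K.faces → S.card = n + 1 → T.card = n + 1 →
    ((convexHull ℝ (S : Set (EuclideanSpace ℝ (Fin n)))) ∩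
        convexHull ℝ (T : Set (EuclideanSpace ℝ (Fin n)))).Nonempty →
    ∃ (N : ℕ) (c : Fin (N + 1) → Finset (EuclideanSpace ℝ (Fin n))),
      c 0 = S ∧ c (Fin.last N) = T ∧
      (∀ i, c i ∈ K.faces ∧ (c i).card = n + 1) ∧
      ∀ i : Fin N,
        (c i.castSucc ∩ c i.succ).card = n ∧ S ∩ T ⊆ c i.castSucc ∩ c i.succ

namespace BrambleHilbert

open Module

/-! ### Barycentric coordinates -/

section BarycentricCoordinates

section VectorSpace

variable {E : Type*} [AddCommGroup E] [Module ℝ E] {S T F : Finset E} {x y z : E}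

/-- The closed simplex spanned by a finite set of vertices. -/
abbrev hull (T : Finset E) : Set E := convexHull ℝ (T : Set E)

/-- A finite set of points is a full simplex if its points are the vertices of a nondegenerate
simplex of the dimension of the space, that is, form an affine basis. -/
structure IsFullSimplex (T : Finset E) : Prop where
  affineIndependent : AffineIndependent ℝ ((↑) : T → E)
  affineSpan_eq_top : affineSpan ℝ (T : Set E) = ⊤

/-- The affine basis formed by the vertices of a full simplex. -/
def IsFullSimplex.affineBasis (hT : IsFullSimplex T) : AffineBasis T ℝ E :=
  ⟨(↑), hT.affineIndependent, by simpa using hT.affineSpan_eq_top⟩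

/-- The barycentric coordinate with respect to the vertex `x` of the full simplex `T`.  It is
defined for all `x`, with value `0` if `x` is no vertex of `T`, so that coordinates with respect to
different simplices can be compared.  The value is also `0` if `T` is not a full simplex. -/
noncomputable def baryCoord (T : Finset E) (x : E) : E →ᵃ[ℝ] ℝ :=
  if h : IsFullSimplex T ∧ x ∈ T then h.1.affineBasis.coord ⟨x, h.2⟩ else 0

lemma baryCoord_of_notMem (hx : x ∉ T) : baryCoord T x = 0 := by
  simp [baryCoord, hx]

lemma baryCoord_linear_sub (T : Finset E) (x y z : E) :
    (baryCoord T x).linear (y - z) = baryCoord T x y - baryCoord T x z := by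
  simpa using AffineMap.linearMap_vsub (baryCoord T x) y z

lemma mem_hull_of_mem (hx : x ∈ T) : x ∈ hull T := subset_convexHull ℝ _ hx

namespace IsFullSimplex

lemma baryCoord_eq_coord (hT : IsFullSimplex T) (x : T) :
    baryCoord T x = hT.affineBasis.coord x := by
  simp [baryCoord, hT]

lemma card_eq [FiniteDimensional ℝ E] (hT : IsFullSimplex T) : T.card = finrank ℝ E + 1 := by
  have h := hT.affineIndependent.affineSpan_eq_top_iff_card_eq_finrank_add_one.1
    (by simpa using hT.affineSpan_eq_top)
  simpa using h

lemma of_card [FiniteDimensional ℝ E] (hT : AffineIndependent ℝ ((↑) : T → E))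
    (hcard : T.card = finrank ℝ E + 1) : IsFullSimplex T := by
  refine ⟨hT, ?_⟩
  have h := hT.affineSpan_eq_top_iff_card_eq_finrank_add_one.2 (by simpa using hcard)
  simpa using h

lemma nonempty (hT : IsFullSimplex T) : T.Nonempty := by
  rw [← Finset.coe_nonempty, ← affineSpan_nonempty ℝ, hT.affineSpan_eq_top]
  exact ⟨0, AffineSubspace.mem_top ℝ E 0⟩

lemma sum_baryCoord (hT : IsFullSimplex T) (y : E) : ∑ x ∈ T, baryCoord T x y = 1 := by
  rw [← hT.affineBasis.sum_coord_apply_eq_one y, ← Finset.sum_coe_sort]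
  simp_rw [hT.baryCoord_eq_coord]

lemma sum_baryCoord_smul (hT : IsFullSimplex T) (y : E) : ∑ x ∈ T, baryCoord T x y • x = y := by
  conv_rhs => rw [← hT.affineBasis.linear_combination_coord_eq_self y]
  rw [← Finset.sum_coe_sort]
  simp_rw [hT.baryCoord_eq_coord]
  rfl

lemma baryCoord_sum_smul (hT : IsFullSimplex T) (hF : F ⊆ T) {c : E → ℝ}
    (hc : ∑ x ∈ F, c x = 1) (x : E) :
    baryCoord T x (∑ z ∈ F, c z • z) = if x ∈ F then c x else 0 := by
  by_cases hx : x ∈ T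
  · set w : T → ℝ := fun z => if (z : E) ∈ F then c z else 0 with hw_def
    have hw : ∑ z, w z = 1 := by
      rw [Finset.sum_coe_sort T fun z => if z ∈ F then c z else 0, Finset.sum_ite_mem,
        Finset.inter_eq_right.2 hF, hc]
    have hsum : ∑ z ∈ F, c z • z = ∑ z : T, w z • hT.affineBasis z := by
      change _ = ∑ z : T, w z • (z : E)
      simp only [hw_def, ite_smul, zero_smul]
      rw [Finset.sum_coe_sort T fun z => if z ∈ F then c z • z else 0, Finset.sum_ite_mem,
        Finset.inter_eq_right.2 hF]
    rw [hT.baryCoord_eq_coord ⟨x, hx⟩, hsum,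
      ← Finset.affineCombination_eq_linear_combination _ _ _ hw,
      hT.affineBasis.coord_apply_combination_of_mem (Finset.mem_univ _) hw]
  · simp [baryCoord_of_notMem hx, show x ∉ F from fun h => hx (hF h)]

lemma baryCoord_vertex (hT : IsFullSimplex T) (hx : x ∈ T) (z : E) :
    baryCoord T z x = if z = x then 1 else 0 := by
  simpa using hT.baryCoord_sum_smul (F := {x}) (by simpa using hx) (c := fun _ => 1) (by simp) z

lemma mem_hull_iff (hT : IsFullSimplex T) : y ∈ hull T ↔ ∀ x, 0 ≤ baryCoord T x y := by
  rw [hull, Finset.mem_convexHull']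
  constructor
  · rintro ⟨w, hw_nonneg, hw_sum, rfl⟩ x
    rw [hT.baryCoord_sum_smul subset_rfl hw_sum]
    split_ifs with hx
    exacts [hw_nonneg x hx, le_rfl]
  · exact fun hy => ⟨fun x => baryCoord T x y, fun x _ => hy x, hT.sum_baryCoord y,
      hT.sum_baryCoord_smul y⟩

lemma baryCoord_nonneg (hT : IsFullSimplex T) (hy : y ∈ hull T) (x : E) : 0 ≤ baryCoord T x y :=
  hT.mem_hull_iff.1 hy x

lemma baryCoord_le_one (hT : IsFullSimplex T) (hy : y ∈ hull T) (x : E) :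
    baryCoord T x y ≤ 1 := by
  by_cases hx : x ∈ T
  · rw [← hT.sum_baryCoord y]
    exact Finset.single_le_sum (f := fun x => baryCoord T x y)
      (fun z _ => hT.baryCoord_nonneg hy z) hx
  · simp [baryCoord_of_notMem hx]

lemma baryCoord_eq_of_mem_hull_inter (hS : IsFullSimplex S) (hT : IsFullSimplex T)
    (hy : y ∈ hull (S ∩ T)) (x : E) : baryCoord S x y = baryCoord T x y := by
  rw [hull, Finset.mem_convexHull'] at hy
  obtain ⟨w, _, hw_sum, rfl⟩ := hy
  rw [hS.baryCoord_sum_smul Finset.inter_subset_left hw_sum,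
    hT.baryCoord_sum_smul Finset.inter_subset_right hw_sum]

end IsFullSimplex

end VectorSpace

section NormedSpace

variable {E : Type*} [NormedAddCommGroup E] [NormedSpace ℝ E] {T : Finset E} {x y : E}

lemma isCompact_hull (T : Finset E) : IsCompact (hull T) :=
  T.finite_toSet.isCompact_convexHull (𝕜 := ℝ)

lemma dist_le_diam_hull (hx : x ∈ hull T) (hy : y ∈ hull T) :
    dist x y ≤ Metric.diam (hull T) :=
  Metric.dist_le_diam_of_mem (isCompact_hull T).isBounded hx hy

namespace IsFullSimplex

variable [FiniteDimensional ℝ E]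

lemma interior_hull_nonempty (hT : IsFullSimplex T) : (interior (hull T)).Nonempty :=
  interior_convexHull_nonempty_iff_affineSpan_eq_top.2 hT.affineSpan_eq_top

lemma diam_hull_pos [Nontrivial E] (hT : IsFullSimplex T) : 0 < Metric.diam (hull T) := by
  have hcard : 1 < T.card := by
    rw [hT.card_eq]
    have := finrank_pos (R := ℝ) (M := E)
    omega
  obtain ⟨x, hx, y, hy, hxy⟩ := Finset.one_lt_card.1 hcard
  exact (dist_pos.2 hxy).trans_le (dist_le_diam_hull (mem_hull_of_mem hx) (mem_hull_of_mem hy))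

end IsFullSimplex

end NormedSpace

end BarycentricCoordinates

/-! ### Shape-regular simplices -/

section Metric

variable {E : Type*} [NormedAddCommGroup E] [NormedSpace ℝ E] {T : Finset E} {x z : E} {ε : ℝ}

lemma transvection_image_hull_subset (hT : IsFullSimplex T) (hx : x ∈ T) (hz : ‖z‖ ≤ 1) :
    LinearMap.transvection (baryCoord T x).linear (Metric.diam (hull T) • z) '' hull T ⊆
      Metric.closedBall (LinearMap.transvection (baryCoord T x).linear
        (Metric.diam (hull T) • z) x) (2 * Metric.diam (hull T)) := by
  rintro _ ⟨y, hy, rfl⟩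
  have hdist : ‖y - x‖ ≤ Metric.diam (hull T) := by
    rw [← dist_eq_norm]
    exact dist_le_diam_hull hy (mem_hull_of_mem hx)
  have hcoord : |(baryCoord T x).linear (y - x)| ≤ 1 := by
    rw [baryCoord_linear_sub, hT.baryCoord_vertex hx, if_pos rfl, abs_le]
    constructor <;> linarith [hT.baryCoord_nonneg hy x, hT.baryCoord_le_one hy x]
  rw [mem_closedBall_iff_norm, ← map_sub, LinearMap.transvection.apply]
  calc ‖y - x + (baryCoord T x).linear (y - x) • Metric.diam (hull T) • z‖
      ≤ ‖y - x‖ + |(baryCoord T x).linear (y - x)| * (Metric.diam (hull T) * ‖z‖) := by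
        refine (norm_add_le _ _).trans ?_
        rw [norm_smul, norm_smul, Real.norm_eq_abs, Real.norm_eq_abs,
          abs_of_nonneg Metric.diam_nonneg]
    _ ≤ Metric.diam (hull T) + 1 * (Metric.diam (hull T) * 1) := by gcongr
    _ = 2 * Metric.diam (hull T) := by ring

/-- The simplex `T` shrunk towards the point `x` to diameter `ε`. -/
def shrunkHull (x : E) (ε : ℝ) (T : Finset E) : Set E :=
  AffineMap.homothety x (ε / Metric.diam (hull T)) '' hull T

lemma isCompact_shrunkHull (x : E) (ε : ℝ) (T : Finset E) : IsCompact (shrunkHull x ε T) :=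
  (isCompact_hull T).image (AffineMap.homothety_continuous _ _)

lemma shrunkHull_subset [FiniteDimensional ℝ E] [Nontrivial E] (hT : IsFullSimplex T)
    (hx : x ∈ T) (hε : 0 ≤ ε) (hεT : ε ≤ Metric.diam (hull T)) :
    shrunkHull x ε T ⊆ hull T ∩ Metric.closedBall x ε := by
  rintro _ ⟨y, hy, rfl⟩
  have hd := hT.diam_hull_pos
  have hratio : 0 ≤ ε / Metric.diam (hull T) := by positivity
  have hx_mem : x ∈ hull T := mem_hull_of_mem hx
  constructor
  · rw [AffineMap.homothety_eq_lineMap]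
    exact (convex_convexHull ℝ _).lineMap_mem hx_mem hy ⟨hratio, (div_le_one hd).2 hεT⟩
  · rw [Metric.mem_closedBall, dist_homothety_center, Real.norm_eq_abs, abs_of_nonneg hratio]
    calc ε / Metric.diam (hull T) * dist x y
        ≤ ε / Metric.diam (hull T) * Metric.diam (hull T) := by
          gcongr
          exact dist_le_diam_hull hx_mem hy
      _ = ε := div_mul_cancel₀ _ hd.ne'

end Metric

section ShapeRegular

variable {E : Type*} [NormedAddCommGroup E] [NormedSpace ℝ E] [MeasurableSpace E]
  {μ : Measure E} {M : ℝ} {S T : Finset E} {x y z : E}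

/-- The volume of the unit ball. -/
noncomputable def ballVol (μ : Measure E) : ℝ := μ.real (Metric.ball 0 1)

/-- A full simplex whose shape measure, with respect to the volume `μ`, is at most `M`.  The bound
is written without a quotient. -/
structure IsShapeRegular (μ : Measure E) (M : ℝ) (T : Finset E) : Prop extends
    IsFullSimplex T where
  diam_pow_le : Metric.diam (hull T) ^ finrank ℝ E ≤ M * μ.real (hull T)

/-- The gradients of the barycentric coordinates of a simplex of shape measure at most `M` are
bounded by this constant over the diameter. -/
noncomputable def gradConst (μ : Measure E) (M : ℝ) : ℝ := 2 ^ finrank ℝ E * ballVol μ * M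

lemma measure_hull_ne_top [IsFiniteMeasureOnCompacts μ] (T : Finset E) : μ (hull T) ≠ ⊤ :=
  (isCompact_hull T).measure_lt_top.ne

variable [FiniteDimensional ℝ E]

lemma ballVol_pos [μ.IsAddHaarMeasure] : 0 < ballVol μ :=
  ENNReal.toReal_pos (Metric.measure_ball_pos _ _ one_pos).ne' measure_ball_lt_top.ne

lemma IsFullSimplex.measure_hull_ne_zero [μ.IsAddHaarMeasure] (hT : IsFullSimplex T) :
    μ (hull T) ≠ 0 :=
  (Measure.measure_pos_of_nonempty_interior _ hT.interior_hull_nonempty).ne'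

lemma IsFullSimplex.measureReal_hull_pos [μ.IsAddHaarMeasure] (hT : IsFullSimplex T) :
    0 < μ.real (hull T) :=
  ENNReal.toReal_pos hT.measure_hull_ne_zero (measure_hull_ne_top T)

lemma IsShapeRegular.const_nonneg [μ.IsAddHaarMeasure] (hT : IsShapeRegular μ M T) : 0 ≤ M := by
  have hvol := hT.measureReal_hull_pos (μ := μ)
  have := (pow_nonneg Metric.diam_nonneg _).trans hT.diam_pow_le
  exact nonneg_of_mul_nonneg_left this hvol

lemma IsShapeRegular.const_pos [μ.IsAddHaarMeasure] [Nontrivial E] (hT : IsShapeRegular μ M T) :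
    0 < M := by
  have := hT.measureReal_hull_pos (μ := μ)
  exact pos_of_mul_pos_left ((pow_pos hT.diam_hull_pos _).trans_le hT.diam_pow_le) this.le

variable [BorelSpace E] [μ.IsAddHaarMeasure]

lemma measureReal_closedBall (x : E) {r : ℝ} (hr : 0 ≤ r) :
    μ.real (Metric.closedBall x r) = r ^ finrank ℝ E * ballVol μ := by
  rw [measureReal_def, Measure.addHaar_closedBall _ _ hr, ENNReal.toReal_mul,
    ENNReal.toReal_ofReal (by positivity), ballVol, measureReal_def]

lemma measureReal_hull_le (hT : T.Nonempty) :
    μ.real (hull T) ≤ ballVol μ * Metric.diam (hull T) ^ finrank ℝ E := by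
  obtain ⟨x, hx⟩ := hT
  have hsub : hull T ⊆ Metric.closedBall x (Metric.diam (hull T)) := fun y hy =>
    dist_le_diam_hull hy (mem_hull_of_mem hx)
  rw [mul_comm, ← measureReal_closedBall x Metric.diam_nonneg]
  exact measureReal_mono hsub measure_closedBall_lt_top.ne

namespace IsShapeRegular

/- The transvection `y ↦ y + ℓ(y) h z`, with `ℓ` the linear part of the coordinate and `h` the
diameter, multiplies volume by `1 + h ℓ(z)`, but keeps the simplex in a ball of radius `2h`. -/
lemma diam_mul_linear_baryCoord_le (hT : IsShapeRegular μ M T) (hx : x ∈ T) (hz : ‖z‖ ≤ 1)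
    (hz_nonneg : 0 ≤ (baryCoord T x).linear z) :
    Metric.diam (hull T) * (baryCoord T x).linear z ≤ gradConst μ M := by
  set h := Metric.diam (hull T)
  set ℓ := (baryCoord T x).linear
  have : 0 ≤ h := Metric.diam_nonneg
  have hvol := hT.measureReal_hull_pos (μ := μ)
  have hdet : LinearMap.det (LinearMap.transvection ℓ (h • z)) = 1 + h * ℓ z := by
    rw [LinearMap.transvection.det, map_smul, smul_eq_mul]
  have hstretch := measureReal_mono (μ := μ)
    (transvection_image_hull_subset hT.toIsFullSimplex hx hz) measure_closedBall_lt_top.ne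
  rw [measureReal_closedBall _ (by positivity), measureReal_def, Measure.addHaar_image_linearMap,
    ENNReal.toReal_mul, ENNReal.toReal_ofReal (abs_nonneg _), hdet,
    abs_of_nonneg (by positivity)] at hstretch
  refine le_of_mul_le_mul_right ?_ hvol
  calc h * ℓ z * μ.real (hull T)
      ≤ (1 + h * ℓ z) * μ.real (hull T) := by gcongr; linarith
    _ ≤ (2 * h) ^ finrank ℝ E * ballVol μ := hstretch
    _ = 2 ^ finrank ℝ E * ballVol μ * h ^ finrank ℝ E := by rw [mul_pow]; ring
    _ ≤ 2 ^ finrank ℝ E * ballVol μ * (M * μ.real (hull T)) := by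
        have := ballVol_pos (μ := μ)
        gcongr
        exact hT.diam_pow_le
    _ = gradConst μ M * μ.real (hull T) := by rw [gradConst]; ring

variable [Nontrivial E]

lemma abs_linear_baryCoord_le (hT : IsShapeRegular μ M T) (x z : E) :
    |(baryCoord T x).linear z| ≤ gradConst μ M / Metric.diam (hull T) * ‖z‖ := by
  have hM := hT.const_pos
  have hd := hT.diam_hull_pos
  by_cases hx : x ∈ T
  swap
  · have := ballVol_pos (μ := μ)
    rw [baryCoord_of_notMem hx]
    simp only [AffineMap.zero_linear, LinearMap.zero_apply, abs_zero, gradConst]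
    positivity
  rw [← div_one (_ / _), ← Real.norm_eq_abs]
  refine LinearMap.bound_of_ball_bound' one_pos _ _ (fun z hz => ?_) z
  rw [mem_closedBall_zero_iff] at hz
  rw [Real.norm_eq_abs, le_div_iff₀' hd]
  rcases le_total 0 ((baryCoord T x).linear z) with hz_sign | hz_sign
  · rw [abs_of_nonneg hz_sign]
    exact hT.diam_mul_linear_baryCoord_le hx hz hz_sign
  · rw [abs_of_nonpos hz_sign, ← map_neg]
    exact hT.diam_mul_linear_baryCoord_le hx (by simpa using hz) (by simpa using hz_sign)

lemma diam_hull_le_dist (hT : IsShapeRegular μ M T) (hx : x ∈ T) (hy : y ∈ T) (hxy : x ≠ y) :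
    Metric.diam (hull T) ≤ gradConst μ M * dist x y := by
  have hbound := hT.abs_linear_baryCoord_le x (x - y)
  rwa [baryCoord_linear_sub, hT.baryCoord_vertex hx, hT.baryCoord_vertex hy, if_pos rfl,
    if_neg hxy, sub_zero, abs_one, ← dist_eq_norm, div_mul_eq_mul_div,
    one_le_div hT.diam_hull_pos] at hbound

end IsShapeRegular

lemma IsFullSimplex.measure_hull_inter_eq_zero (hT : IsFullSimplex T) (hx : x ∈ T) (hxS : x ∉ S) :
    μ (hull (S ∩ T)) = 0 := by
  let A : AffineSubspace ℝ E := (AffineSubspace.mk' (0 : ℝ) ⊥).comap (baryCoord T x)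
  have mem_A (y : E) : y ∈ A ↔ baryCoord T x y = 0 := by
    simp [A, AffineSubspace.mem_comap, AffineSubspace.mem_mk']
  have hA : A ≠ ⊤ := by
    intro htop
    have hxA : x ∈ A := htop ▸ AffineSubspace.mem_top ℝ _ x
    simp [mem_A, hT.baryCoord_vertex hx] at hxA
  refine measure_mono_null (convexHull_min (fun y hy => ?_) A.convex)
    (Measure.addHaar_affineSubspace μ A hA)
  obtain ⟨hyS, hyT⟩ := Finset.mem_inter.1 hy
  rw [SetLike.mem_coe, mem_A, hT.baryCoord_vertex hyT, if_neg]
  rintro rfl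
  exact hxS hyS

lemma IsShapeRegular.pow_le_measureReal_shrunkHull [Nontrivial E] (hT : IsShapeRegular μ M T)
    (x : E) {ε : ℝ} (hε : 0 ≤ ε) :
    ε ^ finrank ℝ E ≤ M * μ.real (shrunkHull x ε T) := by
  have hd := hT.diam_hull_pos
  rw [shrunkHull, measureReal_def, Measure.addHaar_image_homothety, ENNReal.toReal_mul,
    ENNReal.toReal_ofReal (abs_nonneg _), abs_of_nonneg (by positivity), div_pow, ← mul_assoc,
    mul_div_assoc', div_mul_eq_mul_div, le_div_iff₀ (by positivity)]
  calc ε ^ finrank ℝ E * Metric.diam (hull T) ^ finrank ℝ E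
      ≤ ε ^ finrank ℝ E * (M * μ.real (hull T)) := by gcongr; exact hT.diam_pow_le
    _ = M * ε ^ finrank ℝ E * (μ (hull T)).toReal := by rw [measureReal_def]; ring

/- Each of the simplices fills a fixed proportion of a small ball around the common vertex. -/
lemma card_le_of_common_vertex [Nontrivial E] {𝒮 : Finset (Finset E)} (hx : ∀ T ∈ 𝒮, x ∈ T)
    (h𝒮 : ∀ T ∈ 𝒮, IsShapeRegular μ M T)
    (hdisj : ∀ S ∈ 𝒮, ∀ T ∈ 𝒮, S ≠ T → μ (hull S ∩ hull T) = 0) (hM : 0 ≤ M) :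
    (𝒮.card : ℝ) ≤ M * ballVol μ := by
  rcases 𝒮.eq_empty_or_nonempty with rfl | hne
  · simpa using mul_nonneg hM (ballVol_pos (μ := μ)).le
  obtain ⟨T₀, hT₀, hmin⟩ := 𝒮.exists_min_image (fun T => Metric.diam (hull T)) hne
  set ε := Metric.diam (hull T₀)
  have hε : 0 < ε := (h𝒮 T₀ hT₀).diam_hull_pos
  have hsub (T) (hT : T ∈ 𝒮) : shrunkHull x ε T ⊆ hull T ∩ Metric.closedBall x ε :=
    shrunkHull_subset (h𝒮 T hT).toIsFullSimplex (hx T hT) hε.le (hmin T hT)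
  have hpack : ∑ T ∈ 𝒮, μ.real (shrunkHull x ε T) ≤ ε ^ finrank ℝ E * ballVol μ := by
    rw [← measureReal_closedBall x hε.le, ← measureReal_biUnion_finset₀ ?_ ?_
      fun T _ => (isCompact_shrunkHull x ε T).measure_lt_top.ne]
    · exact measureReal_mono (Set.iUnion₂_subset fun T hT => (hsub T hT).trans
        Set.inter_subset_right) measure_closedBall_lt_top.ne
    · exact fun S hS T hT hST => measure_mono_null (Set.inter_subset_inter
        ((hsub S hS).trans Set.inter_subset_left) ((hsub T hT).trans Set.inter_subset_left))
        (hdisj S hS T hT hST)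
    · exact fun T _ => (isCompact_shrunkHull x ε T).measurableSet.nullMeasurableSet
  refine le_of_mul_le_mul_right ?_ (pow_pos hε (finrank ℝ E))
  calc (𝒮.card : ℝ) * ε ^ finrank ℝ E = ∑ _T ∈ 𝒮, ε ^ finrank ℝ E := by simp
    _ ≤ ∑ T ∈ 𝒮, M * μ.real (shrunkHull x ε T) := Finset.sum_le_sum fun T hT =>
        (h𝒮 T hT).pow_le_measureReal_shrunkHull x hε.le
    _ = M * ∑ T ∈ 𝒮, μ.real (shrunkHull x ε T) := by rw [Finset.mul_sum]
    _ ≤ M * (ε ^ finrank ℝ E * ballVol μ) := by gcongr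
    _ = M * ballVol μ * ε ^ finrank ℝ E := by ring

end ShapeRegular

/-! ### Poincaré and trace inequalities on convex sets -/

section RadialEstimates

open Set

variable {E F : Type*} [NormedAddCommGroup E] [NormedSpace ℝ E] [NormedAddCommGroup F]
  [NormedSpace ℝ F] {u : E → F} {T Z : Set E} {x y : E}

lemma enorm_sub_le_lintegral_enorm_fderiv (hu : ContDiff ℝ 1 u) (y d : E) {a b : ℝ} (hab : a ≤ b) :
    ‖u (y + b • d) - u (y + a • d)‖ₑ ≤
      ∫⁻ t in Icc a b, ‖d‖ₑ * ‖fderiv ℝ u (y + t • d)‖ₑ := by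
  have hderiv (t : ℝ) : HasDerivAt (fun t : ℝ => u (y + t • d)) (fderiv ℝ u (y + t • d) d) t :=
    (hu.differentiable one_ne_zero _).hasFDerivAt.comp_hasDerivAt t
      (by simpa using ((hasDerivAt_id t).smul_const d).const_add y)
  have hcomp : ContDiff ℝ 1 fun t : ℝ => u (y + t • d) :=
    hu.comp (contDiff_const.add (contDiff_id.smul contDiff_const))
  refine (enorm_sub_le_lintegral_deriv_of_contDiffOn_Icc hcomp.contDiffOn hab).trans
    (lintegral_mono fun t => ?_)
  rw [(hderiv t).deriv, mul_comm]
  exact ContinuousLinearMap.le_opENorm _ _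

lemma enorm_sub_le_lintegral_indicator (hu : ContDiff ℝ 1 u) (hT : Convex ℝ T) (hx : x ∈ T)
    (hy : y ∈ T) {a b : ℝ} (ha : 0 ≤ a) (hab : a ≤ b) (hb : y + b • (x - y) ∈ T) :
    ‖u (y + b • (x - y)) - u (y + a • (x - y))‖ₑ ≤
      ∫⁻ t in Icc a b,
        Metric.ediam T * T.indicator (fun z => ‖fderiv ℝ u z‖ₑ) (y + t • (x - y)) := by
  refine (enorm_sub_le_lintegral_enorm_fderiv hu y (x - y) hab).trans
    (setLIntegral_mono' measurableSet_Icc fun t ht => ?_)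
  have hmem : y + t • (x - y) ∈ T := by
    rcases ht.2.eq_or_lt with rfl | htb
    · exact hb
    have hb_pos : 0 < b := (ha.trans ht.1).trans_lt htb
    have := hT.add_smul_sub_mem hy hb (t := t / b)
      ⟨div_nonneg (ha.trans ht.1) hb_pos.le, (div_le_one hb_pos).2 ht.2⟩
    rwa [add_sub_cancel_left, smul_smul, div_mul_cancel₀ _ hb_pos.ne'] at this
  rw [indicator_of_mem hmem, ← edist_eq_enorm_sub]
  gcongr
  exact Metric.edist_le_ediam_of_mem hx hy

variable [MeasurableSpace E] [BorelSpace E] [FiniteDimensional ℝ E] {μ : Measure E}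
  [μ.IsAddHaarMeasure]

lemma lintegral_comp_homothety {g : E → ENNReal} (hg : Measurable g) (y : E) {c : ℝ} (hc : 0 < c) :
    ∫⁻ x, g (y + c • (x - y)) ∂μ = ENNReal.ofReal ((c ^ finrank ℝ E)⁻¹) * ∫⁻ x, g x ∂μ := by
  calc ∫⁻ x, g (y + c • (x - y)) ∂μ
      = ∫⁻ x, g (y + c • x) ∂μ := lintegral_sub_right_eq_self (fun x => g (y + c • x)) y
    _ = ∫⁻ x, g (y + x) ∂(Measure.map (c • ·) μ) := by
        rw [lintegral_map (by fun_prop) (by fun_prop)]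
    _ = ENNReal.ofReal ((c ^ finrank ℝ E)⁻¹) * ∫⁻ x, g x ∂μ := by
        rw [Measure.map_addHaar_smul _ hc.ne', lintegral_smul_measure,
          lintegral_add_left_eq_self g y, abs_of_nonneg (by positivity), smul_eq_mul]

lemma lintegral_lintegral_homothety_le {g : E → ENNReal} (hg : Measurable g) (y : E) {c d : ℝ}
    (hc : 0 < c) :
    ∫⁻ x, (∫⁻ t in Icc c d, g (y + t • (x - y))) ∂μ ≤
      ENNReal.ofReal ((c ^ finrank ℝ E)⁻¹ * (d - c)) * ∫⁻ x, g x ∂μ := by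
  rw [lintegral_lintegral_swap (by fun_prop)]
  calc ∫⁻ t in Icc c d, ∫⁻ x, g (y + t • (x - y)) ∂μ
      ≤ ∫⁻ _ in Icc c d, ENNReal.ofReal ((c ^ finrank ℝ E)⁻¹) * ∫⁻ x, g x ∂μ := by
        refine setLIntegral_mono' measurableSet_Icc fun t ht => ?_
        rw [lintegral_comp_homothety hg y (hc.trans_le ht.1)]
        gcongr
        exact ht.1
    _ = ENNReal.ofReal ((c ^ finrank ℝ E)⁻¹ * (d - c)) * ∫⁻ x, g x ∂μ := by
        rw [setLIntegral_const, Real.volume_Icc, ENNReal.ofReal_mul (by positivity)]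
        ring

/- The fundamental theorem of calculus along the rays from `y`, integrated over `x`. -/
lemma lintegral_enorm_radial_sub_le (hu : ContDiff ℝ 1 u) (hT : Convex ℝ T)
    (hTm : MeasurableSet T) (hZm : MeasurableSet Z) (hZ : Z ⊆ T) (hy : y ∈ T) {b : E → ℝ}
    {c d : ℝ} (hc : 0 < c) (hb : ∀ x ∈ Z, b x ∈ Icc c d)
    (hbT : ∀ x ∈ Z, y + b x • (x - y) ∈ T) :
    ∫⁻ x in Z, ‖u (y + b x • (x - y)) - u (y + c • (x - y))‖ₑ ∂μ ≤
      ENNReal.ofReal ((c ^ finrank ℝ E)⁻¹ * (d - c)) *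
        (Metric.ediam T * ∫⁻ x in T, ‖fderiv ℝ u x‖ₑ ∂μ) := by
  set g : E → ENNReal := fun z => Metric.ediam T * T.indicator (fun z => ‖fderiv ℝ u z‖ₑ) z
  have hf : Measurable fun z => ‖fderiv ℝ u z‖ₑ :=
    (hu.continuous_fderiv one_ne_zero).enorm.measurable
  have hg : Measurable g := (hf.indicator hTm).const_mul _
  calc ∫⁻ x in Z, ‖u (y + b x • (x - y)) - u (y + c • (x - y))‖ₑ ∂μ
      ≤ ∫⁻ x in Z, (∫⁻ t in Icc c d, g (y + t • (x - y))) ∂μ := by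
        refine setLIntegral_mono' hZm fun x hx => ?_
        exact (enorm_sub_le_lintegral_indicator hu hT (hZ hx) hy hc.le (hb x hx).1
          (hbT x hx)).trans (lintegral_mono_set (Icc_subset_Icc_right (hb x hx).2))
    _ ≤ ∫⁻ x, (∫⁻ t in Icc c d, g (y + t • (x - y))) ∂μ := setLIntegral_le_lintegral _ _
    _ ≤ ENNReal.ofReal ((c ^ finrank ℝ E)⁻¹ * (d - c)) * ∫⁻ x, g x ∂μ :=
        lintegral_lintegral_homothety_le hg y hc
    _ = ENNReal.ofReal ((c ^ finrank ℝ E)⁻¹ * (d - c)) *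
        (Metric.ediam T * ∫⁻ x in T, ‖fderiv ℝ u x‖ₑ ∂μ) := by
        rw [lintegral_const_mul _ (hf.indicator hTm), lintegral_indicator hTm]

lemma lintegral_enorm_sub_midpoint_le (hu : ContDiff ℝ 1 u) (hT : Convex ℝ T)
    (hTm : MeasurableSet T) (hy : y ∈ T) :
    ∫⁻ x in T, ‖u x - u (midpoint ℝ y x)‖ₑ ∂μ ≤
      2 ^ finrank ℝ E * Metric.ediam T * ∫⁻ x in T, ‖fderiv ℝ u x‖ₑ ∂μ := by
  have hradial := lintegral_enorm_radial_sub_le (μ := μ) hu hT hTm hTm subset_rfl hy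
    (b := fun _ => 1) (c := 1 / 2) (d := 1) (by norm_num) (fun _ _ => by norm_num)
    (fun x hx => by simpa using hx)
  have hmid (x : E) : y + (1 / 2 : ℝ) • (x - y) = midpoint ℝ y x := by
    rw [midpoint_eq_smul_add, invOf_eq_inv]
    module
  simp only [one_smul, add_sub_cancel, hmid] at hradial
  refine hradial.trans ?_
  rw [← mul_assoc]
  gcongr
  calc ENNReal.ofReal (((1 / 2) ^ finrank ℝ E)⁻¹ * (1 - 1 / 2))
      ≤ ENNReal.ofReal (2 ^ finrank ℝ E) := by
        refine ENNReal.ofReal_le_ofReal ?_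
        rw [one_div, inv_pow, inv_inv]
        exact mul_le_of_le_one_right (by positivity) (by norm_num)
    _ = 2 ^ finrank ℝ E := by rw [ENNReal.ofReal_pow zero_le_two, ENNReal.ofReal_ofNat]

/- On average over `y`, the deviation of `u` from `u y` is at most twice the deviation from the
values at midpoints. -/
lemma lintegral_lintegral_enorm_sub_le (hu : ContDiff ℝ 1 u) (hT : Convex ℝ T)
    (hTm : MeasurableSet T) :
    ∫⁻ y in T, ∫⁻ x in T, ‖u x - u y‖ₑ ∂μ ∂μ ≤
      2 ^ (finrank ℝ E + 1) * Metric.ediam T * (∫⁻ x in T, ‖fderiv ℝ u x‖ₑ ∂μ) * μ T := by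
  have hcont := hu.continuous
  have hmid : Continuous fun q : E × E => ‖u q.2 - u (midpoint ℝ q.1 q.2)‖ₑ := by
    simp_rw [midpoint_eq_smul_add]
    fun_prop
  calc ∫⁻ y in T, ∫⁻ x in T, ‖u x - u y‖ₑ ∂μ ∂μ
      ≤ ∫⁻ y in T, ∫⁻ x in T,
          (‖u x - u (midpoint ℝ y x)‖ₑ + ‖u y - u (midpoint ℝ x y)‖ₑ) ∂μ ∂μ := by
        refine lintegral_mono fun y => lintegral_mono fun x => ?_
        rw [midpoint_comm x y, ← sub_sub_sub_cancel_right (u x) (u y) (u (midpoint ℝ y x))]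
        exact enorm_sub_le
    _ = (∫⁻ y in T, ∫⁻ x in T, ‖u x - u (midpoint ℝ y x)‖ₑ ∂μ ∂μ) +
        ∫⁻ y in T, ∫⁻ x in T, ‖u y - u (midpoint ℝ x y)‖ₑ ∂μ ∂μ := by
        rw [← lintegral_add_left hmid.measurable.lintegral_prod_right']
        exact lintegral_congr fun y =>
          lintegral_add_left (hmid.measurable.comp measurable_prodMk_left) _
    _ = 2 * ∫⁻ y in T, ∫⁻ x in T, ‖u x - u (midpoint ℝ y x)‖ₑ ∂μ ∂μ := by
        rw [two_mul, lintegral_lintegral_swap (f := fun y x => ‖u y - u (midpoint ℝ x y)‖ₑ)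
          (hmid.comp continuous_swap).measurable.aemeasurable]
    _ ≤ 2 * ∫⁻ _ in T, 2 ^ finrank ℝ E * Metric.ediam T * ∫⁻ x in T, ‖fderiv ℝ u x‖ₑ ∂μ ∂μ := by
        gcongr 2 * ?_
        exact setLIntegral_mono' hTm fun y hy => lintegral_enorm_sub_midpoint_le hu hT hTm hy
    _ = 2 ^ (finrank ℝ E + 1) * Metric.ediam T * (∫⁻ x in T, ‖fderiv ℝ u x‖ₑ ∂μ) * μ T := by
        rw [setLIntegral_const]
        ring

lemma exists_lintegral_enorm_sub_le (hu : ContDiff ℝ 1 u) (hT : Convex ℝ T)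
    (hTm : MeasurableSet T) (hT_zero : μ T ≠ 0) (hT_top : μ T ≠ ⊤) :
    ∃ y ∈ T, ∫⁻ x in T, ‖u x - u y‖ₑ ∂μ ≤
      2 ^ (finrank ℝ E + 1) * Metric.ediam T * ∫⁻ x in T, ‖fderiv ℝ u x‖ₑ ∂μ := by
  have hcont := hu.continuous
  have hmeas : Measurable fun y => ∫⁻ x in T, ‖u x - u y‖ₑ ∂μ := by
    have : Continuous fun q : E × E => ‖u q.1 - u q.2‖ₑ := by fun_prop
    exact this.measurable.lintegral_prod_left'
  obtain ⟨y, hyT, hy⟩ := exists_le_setLAverage (μ := μ) hT_zero hT_top hmeas.aemeasurable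
  refine ⟨y, hyT, hy.trans ?_⟩
  rw [setLAverage_eq]
  exact ENNReal.div_le_of_le_mul (lintegral_lintegral_enorm_sub_le hu hT hTm)

lemma lintegral_enorm_comp_radial_le (hu : ContDiff ℝ 1 u) (hT : Convex ℝ T)
    (hTm : MeasurableSet T) (hZm : MeasurableSet Z) (hZ : Z ⊆ T) (hy : y ∈ T) {b : E → ℝ}
    (hb : ∀ x ∈ Z, b x ∈ Icc 1 2) (hbT : ∀ x ∈ Z, y + b x • (x - y) ∈ T) :
    ∫⁻ x in Z, ‖u (y + b x • (x - y))‖ₑ ∂μ ≤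
      (∫⁻ x in T, ‖u x‖ₑ ∂μ) + Metric.ediam T * ∫⁻ x in T, ‖fderiv ℝ u x‖ₑ ∂μ := by
  have hradial := lintegral_enorm_radial_sub_le (μ := μ) hu hT hTm hZm hZ hy one_pos hb hbT
  norm_num at hradial
  calc ∫⁻ x in Z, ‖u (y + b x • (x - y))‖ₑ ∂μ
      ≤ ∫⁻ x in Z, (‖u x‖ₑ + ‖u (y + b x • (x - y)) - u x‖ₑ) ∂μ := by
        refine lintegral_mono fun x => ?_
        simpa using enorm_add_le (u x) (u (y + b x • (x - y)) - u x)
    _ = (∫⁻ x in Z, ‖u x‖ₑ ∂μ) + ∫⁻ x in Z, ‖u (y + b x • (x - y)) - u x‖ₑ ∂μ :=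
        lintegral_add_left hu.continuous.enorm.measurable _
    _ ≤ (∫⁻ x in T, ‖u x‖ₑ ∂μ) + Metric.ediam T * ∫⁻ x in T, ‖fderiv ℝ u x‖ₑ ∂μ :=
        add_le_add (lintegral_mono_set hZ) hradial

end RadialEstimates

/-! ### Forms in barycentric coordinates -/

section Forms

section Evaluation

variable {E : Type*} [AddCommGroup E] [Module ℝ E] {S T : Finset E} {P Q : MvPolynomial E ℝ}
  {r : ℕ}

lemma mem_finsuppAntidiag_of_isHomogeneous {σ : Type*} {P : MvPolynomial σ ℝ}
    (hP : P.IsHomogeneous r) {T : Finset σ} {α : σ →₀ ℕ} (hα : α ∈ P.support)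
    (hαT : α.support ⊆ T) : α ∈ Finset.finsuppAntidiag T r := by
  rw [Finset.mem_finsuppAntidiag, hP.degree_eq_sum_deg_support hα]
  exact ⟨(Finset.sum_subset hαT fun x _ hx => Finsupp.notMem_support_iff.1 hx).symm, hαT⟩

lemma eval_eq_sum_finsuppAntidiag {σ : Type*} {P : MvPolynomial σ ℝ} (hP : P.IsHomogeneous r)
    {T : Finset σ} {c : σ → ℝ} (hc : ∀ x ∉ T, c x = 0) :
    MvPolynomial.eval c P =
      ∑ α ∈ Finset.finsuppAntidiag T r, P.coeff α * ∏ x ∈ T, c x ^ α x := by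
  rw [MvPolynomial.eval_eq]
  refine Finset.sum_congr_of_eq_on_inter (fun α hα hαT => ?_) (fun α _ hα => ?_) fun α _ hαT => ?_
  · obtain ⟨x, hx, hxT⟩ := Finset.not_subset.1
      fun h => hαT (mem_finsuppAntidiag_of_isHomogeneous hP hα h)
    rw [Finset.prod_eq_zero hx (by rw [hc x hxT, zero_pow (Finsupp.mem_support_iff.1 hx)]),
      mul_zero]
  · rw [MvPolynomial.notMem_support_iff.1 hα, zero_mul]
  · congr 1
    refine Finset.prod_subset (Finset.mem_finsuppAntidiag.1 hαT).2 fun x _ hx => ?_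
    rw [Finsupp.notMem_support_iff.1 hx, pow_zero]

/-- The function obtained by substituting the barycentric coordinates with respect to `T` for the
variables of `P`.  The variables are indexed by all points of `E`, so that forms for different
simplices can be compared. -/
noncomputable def baryEval (T : Finset E) (P : MvPolynomial E ℝ) (y : E) : ℝ :=
  MvPolynomial.eval (fun x => baryCoord T x y) P

lemma baryEval_eq_sum (hP : P.IsHomogeneous r) (T : Finset E) (y : E) :
    baryEval T P y =
      ∑ α ∈ Finset.finsuppAntidiag T r, P.coeff α * ∏ x ∈ T, baryCoord T x y ^ α x :=
  eval_eq_sum_finsuppAntidiag hP fun x hx => by simp [baryCoord_of_notMem hx]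

lemma baryEval_sub (T : Finset E) (P Q : MvPolynomial E ℝ) (y : E) :
    baryEval T (P - Q) y = baryEval T P y - baryEval T Q y :=
  map_sub _ P Q

lemma baryEval_eq_of_mem_hull_inter (hS : IsFullSimplex S) (hT : IsFullSimplex T) {y : E}
    (hy : y ∈ hull (S ∩ T)) (P : MvPolynomial E ℝ) : baryEval S P y = baryEval T P y := by
  simp only [baryEval, hS.baryCoord_eq_of_mem_hull_inter hT hy]

lemma IsFullSimplex.abs_prod_baryCoord_le_one (hT : IsFullSimplex T) {y : E} (hy : y ∈ hull T)
    (F : Finset E) (α : E → ℕ) :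
    |∏ x ∈ F, baryCoord T x y ^ α x| ≤ 1 := by
  rw [Finset.abs_prod]
  refine Finset.prod_le_one (fun _ _ => abs_nonneg _) fun x _ => ?_
  rw [abs_of_nonneg (pow_nonneg (hT.baryCoord_nonneg hy x) _)]
  exact pow_le_one₀ (hT.baryCoord_nonneg hy x) (hT.baryCoord_le_one hy x)

end Evaluation

section Derivative

variable {E : Type*} [NormedAddCommGroup E] [NormedSpace ℝ E] [FiniteDimensional ℝ E]
  {T : Finset E} {P : MvPolynomial E ℝ} {r : ℕ} {y : E}

lemma hasFDerivAt_affineMap (ℓ : E →ᵃ[ℝ] ℝ) (y : E) :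
    HasFDerivAt ℓ (LinearMap.toContinuousLinearMap ℓ.linear) y :=
  (⟨ℓ, ℓ.continuous_of_finiteDimensional⟩ : E →ᴬ[ℝ] ℝ).hasFDerivAt

lemma contDiff_baryEval (T : Finset E) (P : MvPolynomial E ℝ) {k : WithTop ℕ∞} :
    ContDiff ℝ k (baryEval T P) := by
  unfold baryEval
  simp only [MvPolynomial.eval_eq]
  refine ContDiff.sum fun α _ => contDiff_const.mul (contDiff_prod fun x _ => ContDiff.pow ?_ _)
  exact (⟨baryCoord T x, (baryCoord T x).continuous_of_finiteDimensional⟩ : E →ᴬ[ℝ] ℝ).contDiff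

lemma differentiable_baryEval (T : Finset E) (P : MvPolynomial E ℝ) :
    Differentiable ℝ (baryEval T P) :=
  (contDiff_baryEval T P (k := 1)).differentiable one_ne_zero

namespace IsFullSimplex

lemma exists_hasFDerivAt_prod_baryCoord (hT : IsFullSimplex T) {L : ℝ} (hL_nonneg : 0 ≤ L)
    (hL : ∀ x z, |(baryCoord T x).linear z| ≤ L * ‖z‖) (hy : y ∈ hull T) (α : E → ℕ) :
    ∃ A : E →L[ℝ] ℝ, HasFDerivAt (fun y => ∏ x ∈ T, baryCoord T x y ^ α x) A y ∧
      ‖A‖ ≤ (∑ x ∈ T, α x : ℕ) * L := by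
  refine ⟨_, HasFDerivAt.finsetProd fun x _ => (hasFDerivAt_affineMap (baryCoord T x) y).pow _, ?_⟩
  rw [Nat.cast_sum, Finset.sum_mul]
  refine norm_sum_le_of_le _ fun x _ => ?_
  have hpow : |baryCoord T x y ^ (α x - 1)| ≤ 1 := by
    simpa using hT.abs_prod_baryCoord_le_one hy {x} fun _ => α x - 1
  have hlinear : ‖LinearMap.toContinuousLinearMap (baryCoord T x).linear‖ ≤ L :=
    ContinuousLinearMap.opNorm_le_bound _ hL_nonneg (hL x)
  calc
    _ = |∏ z ∈ T.erase x, baryCoord T z y ^ α z| * (α x * |baryCoord T x y ^ (α x - 1)| *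
        ‖LinearMap.toContinuousLinearMap (baryCoord T x).linear‖) := by
      simp [norm_smul, Finset.abs_prod]
    _ ≤ 1 * (α x * 1 * L) := by
      gcongr
      exact hT.abs_prod_baryCoord_le_one hy _ _
    _ = α x * L := by ring

lemma norm_fderiv_baryEval_le (hT : IsFullSimplex T) {L δ : ℝ} (hL_nonneg : 0 ≤ L)
    (hL : ∀ x z, |(baryCoord T x).linear z| ≤ L * ‖z‖) (hP : P.IsHomogeneous r)
    (hδ : 0 ≤ δ) (hPδ : ∀ α : E →₀ ℕ, α ≠ 0 → α.support ⊆ T → |P.coeff α| ≤ δ)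
    (hy : y ∈ hull T) :
    ‖fderiv ℝ (baryEval T P) y‖ ≤ (finrank ℝ E + r).choose r * (δ * (r * L)) := by
  choose A hA hA_norm using fun α : E →₀ ℕ =>
    hT.exists_hasFDerivAt_prod_baryCoord hL_nonneg hL hy α
  have hderiv : HasFDerivAt (baryEval T P)
      (∑ α ∈ Finset.finsuppAntidiag T r, P.coeff α • A α) y := by
    rw [funext (baryEval_eq_sum hP T)]
    exact HasFDerivAt.fun_sum fun α _ => (hA α).const_mul (P.coeff α)
  have hcard : (Finset.finsuppAntidiag T r).card = (finrank ℝ E + r).choose r := by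
    rw [Finset.card_finsuppAntidiag_nat_eq_choose, hT.card_eq]
    congr 1
    omega
  rw [hderiv.fderiv, ← hcard, ← nsmul_eq_mul]
  refine norm_sum_le_of_le _ (fun α hα => ?_) |>.trans (Finset.sum_const _).le
  have hα := Finset.mem_finsuppAntidiag.1 hα
  have hA_norm := hA_norm α
  rw [hα.1] at hA_norm
  rw [norm_smul, Real.norm_eq_abs]
  rcases eq_or_ne α 0 with rfl | hα_ne
  · have hr : r = 0 := by simpa using hα.1.symm
    have hA_zero : ‖A 0‖ = 0 := le_antisymm (by simpa [hr] using hA_norm) (norm_nonneg _)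
    rw [hA_zero, mul_zero]
    positivity
  · exact mul_le_mul (hPδ α hα_ne hα.2) hA_norm (norm_nonneg _) hδ

end IsFullSimplex

end Derivative

end Forms

/-! ### Coefficients of forms -/

section Coefficients

open scoped NNReal

lemma eval_smul_of_isHomogeneous {σ : Type*} {P : MvPolynomial σ ℝ} {r : ℕ}
    (hP : P.IsHomogeneous r) (c : ℝ) (ω : σ → ℝ) :
    MvPolynomial.eval (c • ω) P = c ^ r * MvPolynomial.eval ω P := by
  rw [MvPolynomial.eval_eq, MvPolynomial.eval_eq, Finset.mul_sum]
  refine Finset.sum_congr rfl fun α hα => ?_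
  simp only [Pi.smul_apply, smul_eq_mul, mul_pow, Finset.prod_mul_distrib,
    Finset.prod_pow_eq_pow_sum, ← hP.degree_eq_sum_deg_support hα]
  ring

variable {ι : Type*} [Fintype ι] {K : Set (ι → ℝ)} {A : Finset (ι →₀ ℕ)} {P : MvPolynomial ι ℝ}

lemma eq_zero_of_ae_eval_eq_zero (hK : (interior K).Nonempty)
    (hP : ∀ᵐ ω ∂volume.restrict K, MvPolynomial.eval ω P = 0) : P = 0 := by
  have hcont : Continuous fun ω : ι → ℝ => MvPolynomial.eval ω P := MvPolynomial.continuous_eval P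
  have heq := Measure.eqOn_open_of_ae_eq (g := fun _ => (0 : ℝ))
    (ae_restrict_of_ae_restrict_of_subset interior_subset hP) isOpen_interior
    hcont.continuousOn continuousOn_const
  obtain ⟨a, ha⟩ := hK
  obtain ⟨ε, hε, hball⟩ := Metric.isOpen_iff.1 isOpen_interior a ha
  refine MvPolynomial.funext_set (fun i => Metric.ball (a i) ε)
    (fun i => (Real.ball_eq_Ioo (a i) ε ▸ Set.Ioo_infinite (by linarith))) fun ω hω => ?_
  rw [map_zero]
  exact heq (hball (ball_pi a hε ▸ hω))

lemma integrable_eval (hK : IsCompact K) (P : MvPolynomial ι ℝ) :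
    Integrable (fun ω => MvPolynomial.eval ω P) (volume.restrict K) :=
  P.continuous_eval.continuousOn.integrableOn_compact hK

/-- The polynomials with exponents in the finite set `A`, given by their coefficients, as elements
of `L¹` of the compact set `K`. -/
noncomputable def evalL1 (hK : IsCompact K) (A : Finset (ι →₀ ℕ)) :
    (A → ℝ) →ₗ[ℝ] (ι → ℝ) →₁[volume.restrict K] ℝ where
  toFun d := (integrable_eval hK (∑ α : A, MvPolynomial.monomial α (d α))).toL1 _
  map_add' d e := by
    rw [← Integrable.toL1_add]
    congr 1
    ext ω
    simp [Finset.sum_add_distrib]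
  map_smul' c d := by
    rw [RingHom.id_apply, ← Integrable.toL1_smul]
    congr 1
    ext ω
    simp [Finset.mul_sum, MvPolynomial.eval_monomial, mul_assoc]

lemma ker_evalL1 (hK : IsCompact K) (hK_int : (interior K).Nonempty) :
    LinearMap.ker (evalL1 hK A) = ⊥ := by
  refine LinearMap.ker_eq_bot'.2 fun d hd => funext fun α => ?_
  have hzero : (∑ α : A, MvPolynomial.monomial (α : ι →₀ ℕ) (d α)) = 0 :=
    eq_zero_of_ae_eval_eq_zero hK_int <| (Integrable.toL1_eq_toL1_iff _ _ (integrable_eval hK _)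
      (integrable_zero _ _ _)).1 (hd.trans (Integrable.toL1_zero _).symm)
  simpa [MvPolynomial.coeff_sum, MvPolynomial.coeff_monomial, Subtype.coe_inj] using
    congrArg (MvPolynomial.coeff (α : ι →₀ ℕ)) hzero

lemma exists_enorm_coeff_le (hK : IsCompact K) (hK_int : (interior K).Nonempty)
    (A : Finset (ι →₀ ℕ)) :
    ∃ C : ℝ≥0, ∀ P : MvPolynomial ι ℝ, P.support ⊆ A → ∀ α,
      ‖P.coeff α‖ₑ ≤ C * ∫⁻ ω in K, ‖MvPolynomial.eval ω P‖ₑ := by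
  obtain ⟨C, _, hC⟩ := (evalL1 hK A).exists_antilipschitzWith (ker_evalL1 hK hK_int)
  refine ⟨C, fun P hP α => ?_⟩
  have hsum : ∑ α : A, MvPolynomial.monomial (α : ι →₀ ℕ) (P.coeff α) = P := by
    rw [Finset.sum_coe_sort A fun α => MvPolynomial.monomial α (P.coeff α)]
    conv_rhs => rw [P.as_sum]
    refine (Finset.sum_subset hP fun α _ hα => ?_).symm
    rw [MvPolynomial.notMem_support_iff.1 hα, map_zero]
  have hnorm : ‖fun α : A => P.coeff α‖ₑ ≤ C * ∫⁻ ω in K, ‖MvPolynomial.eval ω P‖ₑ := by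
    have := hC (fun α : A => P.coeff α) 0
    rwa [map_zero, edist_zero_right, edist_zero_right, evalL1, LinearMap.coe_mk, AddHom.coe_mk,
      Integrable.enorm_toL1, hsum] at this
  by_cases hα : α ∈ A
  · exact (enorm_le_iff_norm_le.2 (norm_le_pi_norm _ (⟨α, hα⟩ : A))).trans hnorm
  · rw [MvPolynomial.notMem_support_iff.1 fun h => hα (hP h), enorm_zero]
    exact zero_le

/-- The box `[1 / (2d), 1 / d]ᵈ`, where `d` is the number of coordinates.  On it the sum of the
coordinates lies in `[1 / 2, 1]`. -/
def coordBox (ι : Type*) [Fintype ι] : Set (ι → ℝ) :=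
  Set.Icc (fun _ => 1 / (2 * (Fintype.card ι : ℝ))) (fun _ => 1 / (Fintype.card ι : ℝ))

lemma isCompact_coordBox (ι : Type*) [Fintype ι] : IsCompact (coordBox ι) := isCompact_Icc

section

variable [Nonempty ι] {ω : ι → ℝ}

lemma interior_coordBox_nonempty : (interior (coordBox ι)).Nonempty := by
  have hcard : (0 : ℝ) < Fintype.card ι := by exact_mod_cast Fintype.card_pos
  rw [coordBox, ← Set.pi_univ_Icc, interior_pi_set Set.finite_univ, Set.univ_pi_nonempty_iff]
  intro _
  rw [interior_Icc, Set.nonempty_Ioo]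
  exact one_div_lt_one_div_of_lt hcard (by linarith)

lemma pos_of_mem_coordBox (hω : ω ∈ coordBox ι) (i : ι) : 0 < ω i := by
  have : (0 : ℝ) < Fintype.card ι := by exact_mod_cast Fintype.card_pos
  exact lt_of_lt_of_le (by positivity) (hω.1 i)

lemma half_le_sum_of_mem_coordBox (hω : ω ∈ coordBox ι) : 1 / 2 ≤ ∑ i, ω i := by
  calc (1 / 2 : ℝ) = ∑ _i : ι, 1 / (2 * (Fintype.card ι : ℝ)) := by simp
    _ ≤ ∑ i, ω i := Finset.sum_le_sum fun i _ => hω.1 i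

lemma sum_le_one_of_mem_coordBox (hω : ω ∈ coordBox ι) : ∑ i, ω i ≤ 1 := by
  calc ∑ i, ω i ≤ ∑ _i : ι, 1 / (Fintype.card ι : ℝ) := Finset.sum_le_sum fun i _ => hω.2 i
    _ = 1 := by simp

lemma exists_enorm_coeff_le_lintegral_coordBox (ι : Type*) [Fintype ι] [Nonempty ι] (r : ℕ) :
    ∃ C : ℝ≥0, ∀ P : MvPolynomial ι ℝ, P.IsHomogeneous r → ∀ α,
      ‖P.coeff α‖ₑ ≤ C * ∫⁻ ω in coordBox ι, ‖MvPolynomial.eval ((∑ i, ω i)⁻¹ • ω) P‖ₑ := by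
  obtain ⟨C, hC⟩ := exists_enorm_coeff_le (isCompact_coordBox ι) interior_coordBox_nonempty
    (Finset.finsuppAntidiag Finset.univ r)
  refine ⟨C, fun P hP α => ?_⟩
  refine (hC P (fun β hβ => mem_finsuppAntidiag_of_isHomogeneous hP hβ (Finset.subset_univ _))
    α).trans ?_
  gcongr C * ?_
  refine setLIntegral_mono' (isCompact_coordBox ι).measurableSet fun ω hω => ?_
  have hsum_pos : 0 < ∑ i, ω i := by linarith [half_le_sum_of_mem_coordBox hω]
  calc ‖MvPolynomial.eval ω P‖ₑ
      = ‖(∑ i, ω i) ^ r‖ₑ * ‖MvPolynomial.eval ((∑ i, ω i)⁻¹ • ω) P‖ₑ := by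
        rw [← enorm_mul, ← eval_smul_of_isHomogeneous hP, smul_inv_smul₀ hsum_pos.ne']
    _ ≤ 1 * ‖MvPolynomial.eval ((∑ i, ω i)⁻¹ • ω) P‖ₑ := by
        gcongr
        rw [Real.enorm_eq_ofReal (by positivity), ENNReal.ofReal_le_one]
        exact pow_le_one₀ hsum_pos.le (sum_le_one_of_mem_coordBox hω)
    _ = _ := one_mul _

end

end Coefficients

/-! ### Traces on a facet -/

section AffineChart

variable {ι : Type*} [Fintype ι] {E : Type*} [NormedAddCommGroup E] [NormedSpace ℝ E]

/-- The affine coordinate system with origin `a` and axes along the basis `b`. -/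
noncomputable def affineChart (b : Basis ι ℝ E) (a : E) : (ι → ℝ) ≃ₜ E :=
  b.equivFunL.symm.toHomeomorph.trans (Homeomorph.addLeft a)

lemma affineChart_apply (b : Basis ι ℝ E) (a : E) (ω : ι → ℝ) :
    affineChart b a ω = a + ∑ i, ω i • b i :=
  congrArg (a + ·) (b.equivFun_symm_apply ω)

variable [MeasurableSpace E] [BorelSpace E] (μ : Measure E) [μ.IsAddHaarMeasure]

lemma measure_parallelepiped_smul_map_affineChart (b : Basis ι ℝ E) (a : E) :
    μ (parallelepiped b) • Measure.map (affineChart b a) volume = μ := by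
  have := b.finiteDimensional_of_finite
  have hvolume : (volume : Measure (ι → ℝ)) = (Pi.basisFun ℝ ι).addHaar := by
    rw [← addHaarMeasure_eq_volume_pi, ← Basis.parallelepiped_basisFun, ← Basis.addHaar_def]
  have hsymm (ω : ι → ℝ) : b.equivFunL.symm ω = ∑ i, ω i • b i := b.equivFun_symm_apply ω
  have hmap : Measure.map b.equivFunL.symm volume = b.addHaar := by
    rw [hvolume, Basis.map_addHaar]
    congr 1
    ext i
    simp [hsymm]
  have hcomp : ⇑(affineChart b a) = (a + ·) ∘ b.equivFunL.symm := rfl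
  rw [hcomp, ← Measure.map_map (by fun_prop) (by fun_prop), hmap, map_add_left_eq_self,
    Basis.addHaar_def]
  exact (Measure.addHaarMeasure_unique μ b.parallelepiped).symm

lemma lintegral_image_affineChart (b : Basis ι ℝ E) (a : E) (B : Set (ι → ℝ)) (g : E → ENNReal) :
    ∫⁻ x in affineChart b a '' B, g x ∂μ =
      μ (parallelepiped b) * ∫⁻ ω in B, g (affineChart b a ω) := by
  have hemb := (affineChart b a).measurableEmbedding
  conv_lhs => rw [← measure_parallelepiped_smul_map_affineChart μ b a]
  rw [Measure.restrict_smul, lintegral_smul_measure, hemb.restrict_map, hemb.lintegral_map,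
    hemb.injective.preimage_image, smul_eq_mul]

end AffineChart

section FacetTrace

variable {ι : Type*} [Fintype ι] {E : Type*} {T : Finset E} {a : E} {f : ι ↪ E}

/-- The family `f` enumerates the vertices of the facet of `T` opposite to the vertex `a`. -/
structure IsFacetOpposite (T : Finset E) (a : E) (f : ι ↪ E) : Prop where
  notMem : a ∉ Finset.univ.map f
  eq_insert : T = insert a (Finset.univ.map f)

namespace IsFacetOpposite

lemma apex_mem (hf : IsFacetOpposite T a f) : a ∈ T := by
  rw [hf.eq_insert]
  exact Finset.mem_insert_self _ _

lemma apply_mem (hf : IsFacetOpposite T a f) (i : ι) : f i ∈ T := by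
  rw [hf.eq_insert]
  exact Finset.mem_insert_of_mem (Finset.mem_map_of_mem f (Finset.mem_univ i))

lemma sum_eq {M : Type*} [AddCommMonoid M] (hf : IsFacetOpposite T a f) (g : E → M) :
    ∑ x ∈ T, g x = g a + ∑ i, g (f i) := by
  rw [hf.eq_insert, Finset.sum_insert hf.notMem, Finset.sum_map]

lemma apply_ne (hf : IsFacetOpposite T a f) (i : ι) : f i ≠ a := fun h =>
  hf.notMem (h ▸ Finset.mem_map_of_mem f (Finset.mem_univ i))

/-- The enumeration `f` of the vertices of a facet, as a bijection onto the vertices of `T` other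
than the opposite vertex `a`. -/
noncomputable def vertexEquiv (hf : IsFacetOpposite T a f) :
    ι ≃ {x : T // x ≠ ⟨a, hf.apex_mem⟩} :=
  Equiv.ofBijective
    (fun i => ⟨⟨f i, hf.apply_mem i⟩, fun h => hf.apply_ne i (congrArg Subtype.val h)⟩)
    ⟨fun i j hij => f.injective (by simpa using hij), fun ⟨⟨x, hx⟩, hxa⟩ => by
      have hne : x ≠ a := fun h => hxa (Subtype.ext h)
      rw [hf.eq_insert] at hx
      simpa [Subtype.ext_iff, hne] using hx⟩

variable [NormedAddCommGroup E] [NormedSpace ℝ E]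

/-- The vertices of the facet as a basis of the ambient space, seen from the opposite vertex. -/
noncomputable def basis (hf : IsFacetOpposite T a f) (hT : IsFullSimplex T) : Basis ι ℝ E :=
  (hT.affineBasis.basisOf ⟨a, hf.apex_mem⟩).reindex hf.vertexEquiv.symm

lemma basis_apply (hf : IsFacetOpposite T a f) (hT : IsFullSimplex T) (i : ι) :
    hf.basis hT i = f i - a := by
  rw [basis, Basis.reindex_apply, Equiv.symm_symm, AffineBasis.basisOf_apply]
  rfl

end IsFacetOpposite

/-- The point of the facet with vertices `f i` whose barycentric coordinates are proportional
to `ω`. -/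
noncomputable def facetPoint [AddCommGroup E] [Module ℝ E] (f : ι ↪ E) (ω : ι → ℝ) : E :=
  ∑ i, ((∑ j, ω j)⁻¹ • ω) i • f i

namespace IsFacetOpposite

variable [NormedAddCommGroup E] [NormedSpace ℝ E]

lemma affineChart_basis_eq (hf : IsFacetOpposite T a f) (hT : IsFullSimplex T) {ω : ι → ℝ}
    (hω : ∑ i, ω i ≠ 0) :
    affineChart (hf.basis hT) a ω = a + (∑ i, ω i) • (facetPoint f ω - a) := by
  simp [affineChart_apply, hf.basis_apply, facetPoint, smul_sub, Finset.smul_sum, smul_smul,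
    mul_inv_cancel_left₀ hω, Finset.sum_sub_distrib, Finset.sum_smul]

lemma baryCoord_affineChart (hf : IsFacetOpposite T a f) (hT : IsFullSimplex T) (ω : ι → ℝ) :
    baryCoord T a (affineChart (hf.basis hT) a ω) = 1 - ∑ i, ω i := by
  have hlin : ∀ i, (baryCoord T a).linear (hf.basis hT i) = -1 := fun i => by
    rw [hf.basis_apply, baryCoord_linear_sub, hT.baryCoord_vertex (hf.apply_mem i),
      hT.baryCoord_vertex hf.apex_mem]
    simp [(hf.apply_ne i).symm]
  rw [affineChart_apply, add_comm, ← vadd_eq_add, AffineMap.map_vadd, map_sum,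
    hT.baryCoord_vertex hf.apex_mem]
  simp [hlin]
  ring

lemma affineChart_baryCoord (hf : IsFacetOpposite T a f) (hT : IsFullSimplex T) (x : E) :
    affineChart (hf.basis hT) a (fun i => baryCoord T (f i) x) = x := by
  have hsum := hT.sum_baryCoord x
  rw [hf.sum_eq fun z => baryCoord T z x] at hsum
  have hcomb := hT.sum_baryCoord_smul x
  rw [hf.sum_eq fun z => baryCoord T z x • z] at hcomb
  conv_rhs => rw [← hcomb, eq_sub_of_add_eq hsum]
  simp only [affineChart_apply, hf.basis_apply, smul_sub, Finset.sum_sub_distrib, ← Finset.sum_smul,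
    sub_smul, one_smul]
  abel

lemma facetPoint_mem_hull (hf : IsFacetOpposite T a f) {ω : ι → ℝ} (hω : ∀ i, 0 ≤ ω i)
    (hsum : 0 < ∑ i, ω i) : facetPoint f ω ∈ hull T :=
  (convex_convexHull ℝ _).sum_mem (fun i _ => mul_nonneg (inv_nonneg.2 hsum.le) (hω i))
    (by simp [← Finset.mul_sum, inv_mul_cancel₀ hsum.ne'])
    fun i _ => mem_hull_of_mem (hf.apply_mem i)

variable [MeasurableSpace E] [BorelSpace E] (μ : Measure E) [μ.IsAddHaarMeasure]

lemma measure_hull_le_parallelepiped (hf : IsFacetOpposite T a f) (hT : IsFullSimplex T) :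
    μ (hull T) ≤ μ (parallelepiped (hf.basis hT)) := by
  have hsub : hull T ⊆ affineChart (hf.basis hT) a '' Set.Icc 0 1 := fun x hx =>
    ⟨fun i => baryCoord T (f i) x, ⟨fun i => hT.baryCoord_nonneg hx _,
      fun i => hT.baryCoord_le_one hx _⟩, hf.affineChart_baryCoord hT x⟩
  calc μ (hull T) ≤ ∫⁻ _ in affineChart (hf.basis hT) a '' Set.Icc 0 1, 1 ∂μ := by
        rw [setLIntegral_one]
        exact measure_mono hsub
    _ = μ (parallelepiped (hf.basis hT)) := by
        rw [lintegral_image_affineChart μ _ a _ fun _ => 1]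
        simp [Real.volume_Icc_pi]

variable {F : Type*} [NormedAddCommGroup F] [NormedSpace ℝ F] {u : E → F}

lemma measure_hull_mul_lintegral_facetPoint_le [FiniteDimensional ℝ E] [Nonempty ι]
    (hf : IsFacetOpposite T a f) (hT : IsFullSimplex T) (hu : ContDiff ℝ 1 u) :
    μ (hull T) * ∫⁻ ω in coordBox ι, ‖u (facetPoint f ω)‖ₑ ≤
      (∫⁻ x in hull T, ‖u x‖ₑ ∂μ) +
        Metric.ediam (hull T) * ∫⁻ x in hull T, ‖fderiv ℝ u x‖ₑ ∂μ := by
  set Φ := affineChart (hf.basis hT) a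
  have hΦ : ∀ ω ∈ coordBox ι, Φ ω = a + (∑ i, ω i) • (facetPoint f ω - a) := fun ω hω =>
    hf.affineChart_basis_eq hT (by linarith [half_le_sum_of_mem_coordBox hω])
  have hpoint : ∀ ω ∈ coordBox ι, facetPoint f ω ∈ hull T := fun ω hω =>
    hf.facetPoint_mem_hull (fun i => (pos_of_mem_coordBox hω i).le)
      (by linarith [half_le_sum_of_mem_coordBox hω])
  have ha := mem_hull_of_mem (T := T) hf.apex_mem
  have hradial : ∀ ω ∈ coordBox ι,
      a + (1 - baryCoord T a (Φ ω))⁻¹ • (Φ ω - a) = facetPoint f ω := fun ω hω => by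
    have hsum : ∑ i, ω i ≠ 0 := by linarith [half_le_sum_of_mem_coordBox hω]
    rw [hf.baryCoord_affineChart hT, sub_sub_cancel, hΦ ω hω, add_sub_cancel_left,
      inv_smul_smul₀ hsum, add_sub_cancel]
  have hle := lintegral_enorm_comp_radial_le (μ := μ) hu (convex_convexHull ℝ _)
    (isCompact_hull T).measurableSet ((isCompact_coordBox ι).image Φ.continuous).measurableSet
    (Set.image_subset_iff.2 fun ω hω => ?_) ha
    (b := fun x => (1 - baryCoord T a x)⁻¹) (Set.forall_mem_image.2 fun ω hω => ?_)
    (Set.forall_mem_image.2 fun ω hω => (hradial ω hω).symm ▸ hpoint ω hω)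
  · calc μ (hull T) * ∫⁻ ω in coordBox ι, ‖u (facetPoint f ω)‖ₑ
        ≤ μ (parallelepiped (hf.basis hT)) * ∫⁻ ω in coordBox ι, ‖u (facetPoint f ω)‖ₑ := by
          gcongr ?_ * _
          exact hf.measure_hull_le_parallelepiped μ hT
      _ = ∫⁻ x in Φ '' coordBox ι, ‖u (a + (1 - baryCoord T a x)⁻¹ • (x - a))‖ₑ ∂μ := by
          rw [lintegral_image_affineChart μ _ a]
          congr 1
          refine setLIntegral_congr_fun (isCompact_coordBox ι).measurableSet fun ω hω => ?_
          exact congrArg (‖u ·‖ₑ) (hradial ω hω).symm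
      _ ≤ _ := hle
  · rw [Set.mem_preimage, hΦ ω hω]
    exact (convex_convexHull ℝ _).add_smul_sub_mem ha (hpoint ω hω)
      ⟨by linarith [half_le_sum_of_mem_coordBox hω], sum_le_one_of_mem_coordBox hω⟩
  · have hhalf := half_le_sum_of_mem_coordBox hω
    rw [hf.baryCoord_affineChart hT, sub_sub_cancel]
    exact ⟨(one_le_inv₀ (by linarith)).2 (sum_le_one_of_mem_coordBox hω),
      (inv_le_comm₀ (by linarith) two_pos).2 (by linarith)⟩

end IsFacetOpposite

end FacetTrace

/-! ### Means of gradients -/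

section GradMean

variable {E F : Type*} [NormedAddCommGroup E] [NormedSpace ℝ E] [MeasurableSpace E]
  [NormedAddCommGroup F] [NormedSpace ℝ F] (μ : Measure E) (p : ℝ) (u : E → F) (K : Set E)

/-- The `p`-th power of the `W^{1,p}` seminorm of `u` on `K`. -/
noncomputable def gradEnergy : ℝ := ∫ x in K, ‖fderiv ℝ u x‖ ^ p ∂μ

/-- The `p`-mean of the gradient of `u` over `K`. -/
noncomputable def gradMean : ℝ := (⨍ x in K, ‖fderiv ℝ u x‖ ^ p ∂μ) ^ (1 / p)

lemma gradEnergy_nonneg : 0 ≤ gradEnergy μ p u K :=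
  integral_nonneg fun _ => Real.rpow_nonneg (norm_nonneg _) _

lemma setAverage_norm_fderiv_rpow : ⨍ x in K, ‖fderiv ℝ u x‖ ^ p ∂μ =
    (μ.real K)⁻¹ * gradEnergy μ p u K :=
  setAverage_eq μ _ K

lemma setAverage_norm_fderiv_rpow_nonneg : 0 ≤ ⨍ x in K, ‖fderiv ℝ u x‖ ^ p ∂μ := by
  rw [setAverage_norm_fderiv_rpow]
  exact mul_nonneg (inv_nonneg.2 measureReal_nonneg) (gradEnergy_nonneg μ p u K)

lemma gradMean_nonneg : 0 ≤ gradMean μ p u K :=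
  Real.rpow_nonneg (setAverage_norm_fderiv_rpow_nonneg μ p u K) _

variable {μ p u K}

lemma gradMean_rpow (hp : 0 < p) :
    gradMean μ p u K ^ p = ⨍ x in K, ‖fderiv ℝ u x‖ ^ p ∂μ := by
  rw [gradMean, ← Real.rpow_mul (setAverage_norm_fderiv_rpow_nonneg μ p u K),
    one_div_mul_cancel hp.ne', Real.rpow_one]

lemma measureReal_mul_gradMean_rpow (hp : 0 < p) (hK : μ.real K ≠ 0) :
    μ.real K * gradMean μ p u K ^ p = gradEnergy μ p u K := by
  rw [gradMean_rpow hp, setAverage_norm_fderiv_rpow, mul_inv_cancel_left₀ hK]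

lemma setIntegral_norm_fderiv_sub_rpow {v w : E → F} (hK : MeasurableSet K)
    (hu : Differentiable ℝ u) (hw : Differentiable ℝ w)
    (huv : Set.EqOn (fderiv ℝ u) (fderiv ℝ v) K) :
    ∫ y in K, ‖fderiv ℝ v y - fderiv ℝ w y‖ ^ p ∂μ = gradEnergy μ p (u - w) K :=
  setIntegral_congr_fun hK fun y hy => by simp only [fderiv_sub (hu y) (hw y), huv hy]

section Continuous

variable [BorelSpace E] [IsFiniteMeasureOnCompacts μ]

lemma integrableOn_norm_fderiv_rpow (hp : 0 ≤ p) (hK : IsCompact K) (hu : ContDiff ℝ 1 u) :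
    IntegrableOn (fun x => ‖fderiv ℝ u x‖ ^ p) K μ :=
  ((hu.continuous_fderiv one_ne_zero).norm.rpow_const fun _ => Or.inr hp).continuousOn
    |>.integrableOn_compact hK

lemma lintegral_enorm_fderiv_le_gradMean (hp : 1 ≤ p) (hK : IsCompact K) (hK_zero : μ K ≠ 0)
    (hu : ContDiff ℝ 1 u) :
    ∫⁻ x in K, ‖fderiv ℝ u x‖ₑ ∂μ ≤ μ K * ENNReal.ofReal (gradMean μ p u K) := by
  have hp_pos : 0 < p := by linarith
  have hcont := hu.continuous_fderiv one_ne_zero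
  have hint : IntegrableOn (fderiv ℝ u) K μ := hcont.continuousOn.integrableOn_compact hK
  have hreal : 0 < μ.real K := ENNReal.toReal_pos hK_zero hK.measure_ne_top
  have hjensen := (convexOn_rpow hp).map_set_average_le
    (Real.continuous_rpow_const hp_pos.le).continuousOn isClosed_Ici hK_zero hK.measure_ne_top
    (Filter.Eventually.of_forall fun x => norm_nonneg _) hint.norm
    (integrableOn_norm_fderiv_rpow hp_pos.le hK hu)
  have hmean : ⨍ x in K, ‖fderiv ℝ u x‖ ∂μ ≤ gradMean μ p u K := by
    rw [← gradMean_rpow hp_pos] at hjensen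
    refine (Real.rpow_le_rpow_iff ?_ (gradMean_nonneg μ p u K) hp_pos).1 hjensen
    rw [setAverage_eq]
    exact mul_nonneg (inv_nonneg.2 hreal.le) (integral_nonneg fun _ => norm_nonneg _)
  rw [setAverage_eq, smul_eq_mul, inv_mul_le_iff₀ hreal] at hmean
  rw [← ofReal_integral_norm_eq_lintegral_enorm hint, ← ENNReal.ofReal_toReal hK.measure_ne_top,
    ← ENNReal.ofReal_mul ENNReal.toReal_nonneg]
  exact ENNReal.ofReal_le_ofReal hmean

end Continuous

/-- The inequality of Poincaré type for `u` on `K`, with the constant that can be achieved on a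
convex set by subtracting a constant from `u`. -/
def HasPoincareBound (μ : Measure E) (u : E → F) (K : Set E) : Prop :=
  ∫⁻ x in K, ‖u x‖ₑ ∂μ ≤
    2 ^ (finrank ℝ E + 1) * Metric.ediam K * ∫⁻ x in K, ‖fderiv ℝ u x‖ₑ ∂μ

end GradMean

section Simplex

variable {E : Type*} [NormedAddCommGroup E] [NormedSpace ℝ E] {T : Finset E} {r : ℕ}
  {P : MvPolynomial E ℝ} {v : E → ℝ} {p : ℝ}

/-- A form of degree `r` represents `baryEval T P + c` because the barycentric coordinates sum
to `1`. -/
lemma IsFullSimplex.exists_baryEval_eq_add (hT : IsFullSimplex T) (hP : P.IsHomogeneous r) (c : ℝ) :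
    ∃ Q : MvPolynomial E ℝ, Q.IsHomogeneous r ∧ baryEval T Q = fun y => baryEval T P y + c := by
  refine ⟨P + MvPolynomial.C c * (∑ x ∈ T, MvPolynomial.X x) ^ r, hP.add ?_, ?_⟩
  · have hsum : (∑ x ∈ T, MvPolynomial.X x : MvPolynomial E ℝ).IsHomogeneous 1 :=
      MvPolynomial.IsHomogeneous.sum _ _ _ fun x _ => MvPolynomial.isHomogeneous_X ℝ x
    simpa using (MvPolynomial.isHomogeneous_C E c).mul (hsum.pow r)
  · ext y
    simp [baryEval, hT.sum_baryCoord]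

variable [FiniteDimensional ℝ E] [MeasurableSpace E] [BorelSpace E] {μ : Measure E}
  [μ.IsAddHaarMeasure]

lemma IsFullSimplex.exists_hasPoincareBound (hT : IsFullSimplex T) (hP : P.IsHomogeneous r)
    (hv : ContDiff ℝ 1 v) :
    ∃ Q : MvPolynomial E ℝ, Q.IsHomogeneous r ∧ HasPoincareBound μ (v - baryEval T Q) (hull T) ∧
      gradEnergy μ p (v - baryEval T Q) (hull T) = gradEnergy μ p (v - baryEval T P) (hull T) := by
  obtain ⟨y, _, hy⟩ := exists_lintegral_enorm_sub_le (μ := μ) (hv.sub (contDiff_baryEval T P))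
    (convex_convexHull ℝ _) (isCompact_hull T).measurableSet hT.measure_hull_ne_zero
    (measure_hull_ne_top T)
  obtain ⟨Q, hQ, hQ_eq⟩ := hT.exists_baryEval_eq_add hP (v y - baryEval T P y)
  have hsub : v - baryEval T Q = fun x => (v - baryEval T P) x - (v - baryEval T P) y := by
    ext x
    simp only [hQ_eq, Pi.sub_apply]
    ring
  have hfderiv : fderiv ℝ (v - baryEval T Q) = fderiv ℝ (v - baryEval T P) := by
    ext1 x
    rw [hsub, fderiv_sub_const]
  refine ⟨Q, hQ, ?_, ?_⟩
  · rw [HasPoincareBound, hfderiv, hsub]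
    exact hy
  · rw [gradEnergy, gradEnergy, hfderiv]

end Simplex

section FacetTrace

variable {ι : Type*} [Fintype ι] [Nonempty ι] {E F : Type*} [NormedAddCommGroup E]
  [NormedSpace ℝ E] [FiniteDimensional ℝ E] [MeasurableSpace E] [BorelSpace E]
  [NormedAddCommGroup F] [NormedSpace ℝ F] {T : Finset E} {a : E} {f : ι ↪ E} {μ : Measure E}
  [μ.IsAddHaarMeasure] {u : E → F} {p : ℝ}

lemma HasPoincareBound.lintegral_facetPoint_le (hu_bound : HasPoincareBound μ u (hull T))
    (hf : IsFacetOpposite T a f) (hT : IsFullSimplex T) (hu : ContDiff ℝ 1 u) (hp : 1 ≤ p) :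
    ∫⁻ ω in coordBox ι, ‖u (facetPoint f ω)‖ₑ ≤
      ENNReal.ofReal ((2 ^ (finrank ℝ E + 1) + 1) *
        (Metric.diam (hull T) * gradMean μ p u (hull T))) := by
  have hdiam : ENNReal.ofReal (Metric.diam (hull T)) = Metric.ediam (hull T) :=
    ENNReal.ofReal_toReal (isCompact_hull T).isBounded.ediam_ne_top
  have hconst : ENNReal.ofReal (2 ^ (finrank ℝ E + 1) + 1) = 2 ^ (finrank ℝ E + 1) + 1 := by
    rw [ENNReal.ofReal_add (by positivity) zero_le_one, ENNReal.ofReal_pow zero_le_two]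
    simp
  rw [← ENNReal.mul_le_mul_iff_right (hT.measure_hull_ne_zero (μ := μ)) (measure_hull_ne_top T),
    ENNReal.ofReal_mul (by positivity), ENNReal.ofReal_mul Metric.diam_nonneg, hdiam, hconst]
  calc μ (hull T) * ∫⁻ ω in coordBox ι, ‖u (facetPoint f ω)‖ₑ
      ≤ (∫⁻ x in hull T, ‖u x‖ₑ ∂μ) +
          Metric.ediam (hull T) * ∫⁻ x in hull T, ‖fderiv ℝ u x‖ₑ ∂μ :=
        hf.measure_hull_mul_lintegral_facetPoint_le μ hT hu
    _ ≤ 2 ^ (finrank ℝ E + 1) * Metric.ediam (hull T) * (∫⁻ x in hull T, ‖fderiv ℝ u x‖ₑ ∂μ) +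
          Metric.ediam (hull T) * ∫⁻ x in hull T, ‖fderiv ℝ u x‖ₑ ∂μ :=
        add_le_add hu_bound le_rfl
    _ = (2 ^ (finrank ℝ E + 1) + 1) * Metric.ediam (hull T) *
          ∫⁻ x in hull T, ‖fderiv ℝ u x‖ₑ ∂μ := by ring
    _ ≤ (2 ^ (finrank ℝ E + 1) + 1) * Metric.ediam (hull T) *
          (μ (hull T) * ENNReal.ofReal (gradMean μ p u (hull T))) := by
        gcongr
        exact lintegral_enorm_fderiv_le_gradMean hp (isCompact_hull T) hT.measure_hull_ne_zero hu
    _ = _ := by ring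

end FacetTrace

/-! ### Coefficients belonging to a facet -/

section FacetCoefficients

open scoped NNReal

lemma eval_killCompl {σ τ : Type*} {f : σ → τ} (hf : Function.Injective f) {c : τ → ℝ}
    (hc : ∀ x ∉ Set.range f, c x = 0) (P : MvPolynomial τ ℝ) :
    MvPolynomial.eval (c ∘ f) (MvPolynomial.killCompl hf P) = MvPolynomial.eval c P := by
  induction P using MvPolynomial.induction_on with
  | C a => simp
  | add P Q hP hQ => simp [hP, hQ]
  | mul_X P x hP =>
    rw [map_mul, map_mul, map_mul, hP, MvPolynomial.eval_X]
    congr 1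
    by_cases hx : x ∈ Set.range f
    · obtain ⟨i, rfl⟩ := hx
      rw [← MvPolynomial.rename_X, MvPolynomial.killCompl_rename_app, MvPolynomial.eval_X,
        Function.comp_apply]
    · rw [MvPolynomial.killCompl, MvPolynomial.aeval_X, dif_neg hx, map_zero, hc x hx]

lemma isHomogeneous_killCompl {σ τ : Type*} {f : σ → τ} (hf : Function.Injective f) {r : ℕ}
    {P : MvPolynomial τ ℝ} (hP : P.IsHomogeneous r) :
    (MvPolynomial.killCompl hf P).IsHomogeneous r := by
  intro α hα
  rw [MvPolynomial.coeff_killCompl] at hα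
  rw [← hP hα, Finsupp.weight_apply, Finsupp.weight_apply,
    Finsupp.sum_mapDomain_index (by simp) (by simp)]
  rfl

variable {ι : Type*} [Fintype ι] {E : Type*} {T : Finset E} {f : ι ↪ E}

lemma exists_isFacetOpposite (hf : Finset.univ.map f ⊆ T)
    (hcard : T.card = Fintype.card ι + 1) : ∃ a, IsFacetOpposite T a f := by
  obtain ⟨a, ha, hT⟩ := Finset.exists_eq_insert_iff.2 ⟨hf, by simp [hcard]⟩
  exact ⟨a, ha, hT.symm⟩

lemma exists_map_univ_eq {F : Finset E} (hF : F.card = Fintype.card ι) :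
    ∃ f : ι ↪ E, Finset.univ.map f = F := by
  let e : ι ≃ F := Fintype.equivOfCardEq (by rw [Fintype.card_coe, hF])
  refine ⟨e.toEmbedding.trans (Function.Embedding.subtype _), ?_⟩
  rw [← Finset.map_map, Finset.map_univ_equiv, Finset.univ_eq_attach]
  exact Finset.attach_map_val

lemma exists_enorm_coeff_sub_le (ι : Type*) [Fintype ι] [Nonempty ι] (r : ℕ) :
    ∃ C : ℝ≥0, ∀ (f : ι ↪ E) (P Q : MvPolynomial E ℝ), P.IsHomogeneous r → Q.IsHomogeneous r →
      ∀ α : E →₀ ℕ, α.support ⊆ Finset.univ.map f →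
        ‖P.coeff α - Q.coeff α‖ₑ ≤ C * ∫⁻ ω in coordBox ι,
          ‖MvPolynomial.eval ((∑ i, ω i)⁻¹ • ω) (MvPolynomial.killCompl f.injective P) -
            MvPolynomial.eval ((∑ i, ω i)⁻¹ • ω) (MvPolynomial.killCompl f.injective Q)‖ₑ := by
  obtain ⟨C, hC⟩ := exists_enorm_coeff_le_lintegral_coordBox ι r
  refine ⟨C, fun f P Q hP hQ α hα => ?_⟩
  have hα_eq : (α.comapDomain f f.injective.injOn).mapDomain f = α :=
    Finsupp.mapDomain_comapDomain f f.injective α fun x hx => by simpa using hα hx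
  have hle := hC (MvPolynomial.killCompl f.injective (P - Q))
    (isHomogeneous_killCompl f.injective (hP.sub hQ)) (α.comapDomain f f.injective.injOn)
  simpa only [MvPolynomial.coeff_killCompl, hα_eq, map_sub, MvPolynomial.coeff_sub] using hle

variable [NormedAddCommGroup E] [NormedSpace ℝ E] {a : E} {v : E → ℝ} {p : ℝ} {r : ℕ}
  {P : MvPolynomial E ℝ}

lemma IsFacetOpposite.baryCoord_facetPoint (hf : IsFacetOpposite T a f) (hT : IsFullSimplex T)
    {ω : ι → ℝ} (hω : ∑ i, ω i ≠ 0) (x : E) :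
    baryCoord T x (facetPoint f ω) = Function.extend f ((∑ i, ω i)⁻¹ • ω) 0 x := by
  have hsub : Finset.univ.map f ⊆ T := hf.eq_insert ▸ Finset.subset_insert _ _
  have hpoint : facetPoint f ω =
      ∑ z ∈ Finset.univ.map f, Function.extend f ((∑ i, ω i)⁻¹ • ω) 0 z • z := by
    simp [facetPoint, f.injective.extend_apply]
  rw [hpoint, hT.baryCoord_sum_smul hsub]
  · by_cases hx : x ∈ Finset.univ.map f
    · rw [if_pos hx]
    · rw [if_neg hx, Function.extend_apply' _ _ _ (by simpa using hx), Pi.zero_apply]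
  · simp [f.injective.extend_apply, ← Finset.mul_sum, inv_mul_cancel₀ hω]

lemma IsFacetOpposite.baryEval_facetPoint (hf : IsFacetOpposite T a f) (hT : IsFullSimplex T)
    {ω : ι → ℝ} (hω : ∑ i, ω i ≠ 0) (P : MvPolynomial E ℝ) :
    baryEval T P (facetPoint f ω) =
      MvPolynomial.eval ((∑ i, ω i)⁻¹ • ω) (MvPolynomial.killCompl f.injective P) := by
  simp only [baryEval, hf.baryCoord_facetPoint hT hω]
  rw [← eval_killCompl f.injective fun x hx => Function.extend_apply' _ _ x hx,
    Function.extend_comp f.injective]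

lemma IsFullSimplex.baryEval_vertex (hT : IsFullSimplex T) {x : E} (hx : x ∈ T)
    (hP : P.IsHomogeneous r) : baryEval T P x = P.coeff (Finsupp.single x r) := by
  have hmem : Finsupp.single x r ∈ Finset.finsuppAntidiag T r := by
    rw [Finset.mem_finsuppAntidiag, Finset.sum_eq_single_of_mem x hx (by simp +contextual)]
    exact ⟨by simp, Finsupp.support_single_subset.trans (by simpa using hx)⟩
  rw [baryEval_eq_sum hP, Finset.sum_eq_single_of_mem _ hmem fun α hα hne => ?_,
    Finset.prod_eq_one fun z _ => ?_, mul_one]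
  · by_cases hz : z = x <;> simp [hT.baryCoord_vertex hx, hz]
  · obtain ⟨z, hz, hzx⟩ : ∃ z ∈ T, z ≠ x ∧ α z ≠ 0 := by
      by_contra! hzero
      rw [Finset.mem_finsuppAntidiag, Finset.sum_eq_single_of_mem x hx hzero] at hα
      refine hne (Finsupp.ext fun z => ?_)
      by_cases hz : z ∈ T
      · by_cases hzx : z = x
        · simp [hzx, hα.1]
        · simp [hzero z hz hzx, Ne.symm hzx]
      · have hzx : x ≠ z := fun h => hz (h ▸ hx)
        simp [Finsupp.notMem_support_iff.1 fun h => hz (hα.2 h), hzx]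
    refine mul_eq_zero_of_right _ (Finset.prod_eq_zero hz ?_)
    rw [hT.baryCoord_vertex hx, if_neg hzx.1, zero_pow hzx.2]

section

variable [MeasurableSpace E] (μ : Measure E)

/-- On `T` the form `P` of degree `r` approximates `v` with the right additive constant. -/
structure IsNormalizedForm (v : E → ℝ) (r : ℕ) (T : Finset E) (P : MvPolynomial E ℝ) : Prop where
  isHomogeneous : P.IsHomogeneous r
  hasPoincareBound : HasPoincareBound μ (v - baryEval T P) (hull T)

/-- The bound for the values of `v - baryEval T P` that corresponds to the mean of its gradient. -/
noncomputable def localError (p : ℝ) (v : E → ℝ) (T : Finset E) (P : MvPolynomial E ℝ) : ℝ :=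
  Metric.diam (hull T) * gradMean μ p (v - baryEval T P) (hull T)

lemma localError_nonneg (p : ℝ) (v : E → ℝ) (T : Finset E) (P : MvPolynomial E ℝ) :
    0 ≤ localError μ p v T P :=
  mul_nonneg Metric.diam_nonneg (gradMean_nonneg μ p _ _)

end

variable [FiniteDimensional ℝ E] [MeasurableSpace E] [BorelSpace E] {μ : Measure E}
  [μ.IsAddHaarMeasure]

lemma lintegral_enorm_eval_sub_eval_le (f : ι ↪ E) (hv : Continuous v) (P Q : MvPolynomial ι ℝ)
    (B : Set (ι → ℝ)) :
    ∫⁻ ω in B, ‖MvPolynomial.eval ((∑ i, ω i)⁻¹ • ω) P -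
        MvPolynomial.eval ((∑ i, ω i)⁻¹ • ω) Q‖ₑ ≤
      (∫⁻ ω in B, ‖v (facetPoint f ω) - MvPolynomial.eval ((∑ i, ω i)⁻¹ • ω) P‖ₑ) +
        ∫⁻ ω in B, ‖v (facetPoint f ω) - MvPolynomial.eval ((∑ i, ω i)⁻¹ • ω) Q‖ₑ := by
  have hscale : Measurable fun ω : ι → ℝ => (∑ i, ω i)⁻¹ • ω := by fun_prop
  have hpoint : Measurable (facetPoint f) := by
    unfold facetPoint
    fun_prop
  have hdiff : Measurable fun ω : ι → ℝ =>
      ‖v (facetPoint f ω) - MvPolynomial.eval ((∑ i, ω i)⁻¹ • ω) P‖ₑ :=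
    ((hv.measurable.comp hpoint).sub
      ((MvPolynomial.continuous_eval P).measurable.comp hscale)).enorm
  rw [← lintegral_add_left hdiff]
  refine lintegral_mono fun ω => ?_
  rw [enorm_sub_rev (v _) (MvPolynomial.eval _ P)]
  simpa using enorm_add_le (MvPolynomial.eval ((∑ i, ω i)⁻¹ • ω) P - v (facetPoint f ω))
    (v (facetPoint f ω) - MvPolynomial.eval ((∑ i, ω i)⁻¹ • ω) Q)

lemma IsNormalizedForm.lintegral_facetPoint_le [Nonempty ι] (hP : IsNormalizedForm μ v r T P)
    (hf : IsFacetOpposite T a f) (hT : IsFullSimplex T) (hv : ContDiff ℝ 1 v) (hp : 1 ≤ p) :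
    ∫⁻ ω in coordBox ι, ‖v (facetPoint f ω) -
        MvPolynomial.eval ((∑ i, ω i)⁻¹ • ω) (MvPolynomial.killCompl f.injective P)‖ₑ ≤
      ENNReal.ofReal ((2 ^ (finrank ℝ E + 1) + 1) * localError μ p v T P) := by
  refine le_of_eq_of_le ?_ (hP.hasPoincareBound.lintegral_facetPoint_le hf hT
    (hv.sub (contDiff_baryEval T P)) hp)
  refine setLIntegral_congr_fun (isCompact_coordBox ι).measurableSet fun ω hω => ?_
  have hsum : ∑ i, ω i ≠ 0 := by linarith [half_le_sum_of_mem_coordBox hω]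
  simp only [Pi.sub_apply, hf.baryEval_facetPoint hT hsum]

/-- The values of `v` on the common facet cancel. -/
lemma exists_abs_coeff_sub_le [Nontrivial E] (μ : Measure E) [μ.IsAddHaarMeasure] (r : ℕ) :
    ∃ C ≥ 0, ∀ (p : ℝ) (v : E → ℝ), 1 ≤ p → ContDiff ℝ 1 v →
      ∀ S T : Finset E, IsFullSimplex S → IsFullSimplex T → (S ∩ T).card = finrank ℝ E →
      ∀ P Q, IsNormalizedForm μ v r S P → IsNormalizedForm μ v r T Q →
      ∀ α : E →₀ ℕ, α.support ⊆ S ∩ T →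
        |P.coeff α - Q.coeff α| ≤ C * localError μ p v S P + C * localError μ p v T Q := by
  have : NeZero (finrank ℝ E) := ⟨finrank_pos.ne'⟩
  obtain ⟨C, hC⟩ := exists_enorm_coeff_sub_le (E := E) (Fin (finrank ℝ E)) r
  refine ⟨C * (2 ^ (finrank ℝ E + 1) + 1), by positivity, ?_⟩
  intro p v hp hv S T hS hT hcard P Q hP hQ α hα
  obtain ⟨f, hf⟩ := exists_map_univ_eq (ι := Fin (finrank ℝ E)) (by simpa using hcard)
  rw [← hf] at hα
  obtain ⟨a, ha⟩ := exists_isFacetOpposite (f := f) (T := S)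
    (hf ▸ Finset.inter_subset_left) (by simpa using hS.card_eq)
  obtain ⟨b, hb⟩ := exists_isFacetOpposite (f := f) (T := T)
    (hf ▸ Finset.inter_subset_right) (by simpa using hT.card_eq)
  have hle := (hC f P Q hP.isHomogeneous hQ.isHomogeneous α hα).trans
    (mul_le_mul_right ((lintegral_enorm_eval_sub_eval_le f hv.continuous _ _ _).trans
      (add_le_add (hP.lintegral_facetPoint_le ha hS hv hp)
        (hQ.lintegral_facetPoint_le hb hT hv hp))) _)
  have hP_nonneg := localError_nonneg μ p v S P
  have hQ_nonneg := localError_nonneg μ p v T Q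
  rw [← ENNReal.ofReal_add (by positivity) (by positivity), ← ENNReal.ofReal_coe_nnreal,
    ← ENNReal.ofReal_mul C.coe_nonneg, Real.enorm_eq_ofReal_abs,
    ENNReal.ofReal_le_ofReal_iff (by positivity)] at hle
  linarith

lemma IsNormalizedForm.abs_sub_coeff_single_le (hP : IsNormalizedForm μ v r T P)
    (hE : finrank ℝ E = 1) (hT : IsFullSimplex T) (hv : ContDiff ℝ 1 v) (hp : 1 ≤ p) {x : E}
    (hx : x ∈ T) : |P.coeff (Finsupp.single x r) - v x| ≤ 10 * localError μ p v T P := by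
  obtain ⟨f, hf⟩ := exists_map_univ_eq (ι := Unit) (F := {x}) (by simp)
  obtain ⟨a, ha⟩ := exists_isFacetOpposite (f := f) (T := T)
    (by rwa [hf, Finset.singleton_subset_iff]) (by simp [hT.card_eq, hE])
  have hvol : volume (coordBox Unit) = ENNReal.ofReal (1 / 2) := by
    norm_num [coordBox, Real.volume_Icc_pi]
  have hfx : f () = x := Finset.mem_singleton.1 (hf ▸ Finset.mem_map_of_mem f (Finset.mem_univ ()))
  have hpoint : ∀ ω ∈ coordBox Unit, facetPoint f ω = x := fun ω hω => by
    have hne : ω () ≠ 0 := (pos_of_mem_coordBox hω ()).ne'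
    simp [facetPoint, hfx, hne]
  have hle := hP.hasPoincareBound.lintegral_facetPoint_le ha hT (hv.sub (contDiff_baryEval T P)) hp
  rw [setLIntegral_congr_fun (g := fun _ => ‖(v - baryEval T P) x‖ₑ)
      (isCompact_coordBox Unit).measurableSet fun ω hω => by rw [hpoint ω hω],
    setLIntegral_const, hvol, hE, Pi.sub_apply, hT.baryEval_vertex hx hP.isHomogeneous] at hle
  have hnonneg := localError_nonneg μ p v T P
  rw [Real.enorm_eq_ofReal_abs, ← ENNReal.ofReal_mul (abs_nonneg _),
    ENNReal.ofReal_le_ofReal_iff (by rw [localError] at hnonneg; positivity), abs_sub_comm] at hle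
  rw [localError]
  linarith

end FacetCoefficients

/-! ### Meshes -/

section Walks

variable {V : Type*} {G : SimpleGraph V} {x y : V}

lemma abs_sub_le_two_mul_sum_support {b δ : V → ℝ} (hδ : ∀ z, 0 ≤ δ z)
    (hb : ∀ z w, G.Adj z w → |b z - b w| ≤ δ z + δ w) (w : G.Walk x y) :
    |b x - b y| ≤ 2 * (w.support.map δ).sum - δ x := by
  induction w with
  | @nil z =>
    have := hδ z
    simp only [sub_self, abs_zero, SimpleGraph.Walk.support_nil, List.map_cons, List.map_nil,
      List.sum_cons, List.sum_nil]
    linarith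
  | @cons x z y hxz w ih =>
    rw [SimpleGraph.Walk.support_cons, List.map_cons, List.sum_cons]
    linarith [hb x z hxz, abs_sub_le (b x) (b z) (b y)]

lemma le_pow_length_mul {h : V → ℝ} {Λ : ℝ} (hΛ : 0 ≤ Λ)
    (hadj : ∀ z w, G.Adj z w → h z ≤ Λ * h w) (w : G.Walk x y) : h x ≤ Λ ^ w.length * h y := by
  induction w with
  | nil => simp
  | @cons x z y hxz w ih =>
    calc h x ≤ Λ * h z := hadj x z hxz
      _ ≤ Λ * (Λ ^ w.length * h y) := by gcongr
      _ = Λ ^ (SimpleGraph.Walk.cons hxz w).length * h y := by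
        rw [SimpleGraph.Walk.length_cons, pow_succ', mul_assoc]

variable [Fintype V]

lemma abs_sub_le_two_mul_sum_of_reachable {b δ : V → ℝ} (hδ : ∀ z, 0 ≤ δ z)
    (hb : ∀ z w, G.Adj z w → |b z - b w| ≤ δ z + δ w) (hxy : G.Reachable x y) :
    |b x - b y| ≤ 2 * ∑ z, δ z := by
  obtain ⟨w, hw⟩ := hxy.exists_isPath
  have hsum : (w.support.map δ).sum ≤ ∑ z, δ z := by
    rw [← List.sum_toFinset _ hw.support_nodup]
    exact Finset.sum_le_sum_of_subset_of_nonneg (Finset.subset_univ _) fun z _ _ => hδ z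
  linarith [abs_sub_le_two_mul_sum_support hδ hb w, hδ x]

lemma le_pow_card_mul_of_reachable {h : V → ℝ} {Λ : ℝ} (hΛ : 1 ≤ Λ) (hh : ∀ z, 0 ≤ h z)
    (hadj : ∀ z w, G.Adj z w → h z ≤ Λ * h w) (hxy : G.Reachable x y) :
    h x ≤ Λ ^ Fintype.card V * h y := by
  obtain ⟨w, hw⟩ := hxy.exists_isPath
  exact (le_pow_length_mul (zero_le_one.trans hΛ) hadj w).trans
    (mul_le_mul_of_nonneg_right (pow_le_pow_right₀ hΛ hw.length_lt.le) (hh y))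

end Walks

section Mesh

variable {E : Type*} {𝒯 : Finset (Finset E)} {S T σ : Finset E}

/-- The star of a face `σ`: the simplices of `𝒯` that contain `σ`. -/
noncomputable def faceStar (𝒯 : Finset (Finset E)) (σ : Finset E) : Finset (Finset E) :=
  {T ∈ 𝒯 | σ ⊆ T}

lemma mem_faceStar : T ∈ faceStar 𝒯 σ ↔ T ∈ 𝒯 ∧ σ ⊆ T :=
  Finset.mem_filter

lemma faceStar_subset_filter_mem {x : E} (hx : x ∈ σ) :
    faceStar 𝒯 σ ⊆ ({T ∈ 𝒯 | x ∈ T} : Finset (Finset E)) := fun _ hT =>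
  Finset.mem_filter.2 ⟨(mem_faceStar.1 hT).1, (mem_faceStar.1 hT).2 hx⟩

variable [NormedAddCommGroup E] [NormedSpace ℝ E]

/-- The simplices around the face `σ`, two of them being adjacent if they share a facet. -/
def starGraph (𝒯 : Finset (Finset E)) (σ : Finset E) : SimpleGraph (faceStar 𝒯 σ) where
  Adj S T := S ≠ T ∧ (S.1 ∩ T.1).card = finrank ℝ E
  symm := ⟨fun _ _ h => ⟨h.1.symm, by rw [Finset.inter_comm, h.2]⟩⟩
  loopless := ⟨fun _ h => h.1 rfl⟩

variable [MeasurableSpace E] {μ : Measure E} {M : ℝ}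

/-- The full simplices of a shape-regular face-connected simplicial complex. -/
structure IsMesh (μ : Measure E) (M : ℝ) (𝒯 : Finset (Finset E)) : Prop where
  isShapeRegular : ∀ T ∈ 𝒯, IsShapeRegular μ M T
  hull_inter_subset : ∀ S ∈ 𝒯, ∀ T ∈ 𝒯, hull S ∩ hull T ⊆ hull (S ∩ T)
  preconnected_starGraph : ∀ σ : Finset E, σ.Nonempty → (starGraph 𝒯 σ).Preconnected

/-- A bound for the ratio of the diameters of two simplices of a mesh that share a vertex, valid
in dimension at least two. -/
noncomputable def diamRatio (μ : Measure E) (M : ℝ) : ℝ :=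
  max 1 (gradConst μ M) ^ ⌊M * ballVol μ⌋₊

lemma one_le_diamRatio (μ : Measure E) (M : ℝ) : 1 ≤ diamRatio μ M :=
  one_le_pow₀ (le_max_left _ _)

/-- The bound for the ratio of the volumes of two simplices that corresponds to `diamRatio`. -/
noncomputable def volRatio (μ : Measure E) (M : ℝ) : ℝ :=
  ballVol μ * M * diamRatio μ M ^ finrank ℝ E

/-- The neighbours of `T` that are not much smaller than `T`. -/
noncomputable def patch (μ : Measure E) (M : ℝ) (𝒯 : Finset (Finset E)) (T : Finset E) :
    Finset (Finset E) :=
  {S ∈ 𝒯 | (S ∩ T).Nonempty ∧ μ.real (hull T) ≤ volRatio μ M * μ.real (hull S)}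

lemma patch_subset_filter_inter :
    patch μ M 𝒯 T ⊆ ({S ∈ 𝒯 | (S ∩ T).Nonempty} : Finset (Finset E)) := fun _ hS =>
  Finset.mem_filter.2 ⟨(Finset.mem_filter.1 hS).1, (Finset.mem_filter.1 hS).2.1⟩

namespace IsMesh

variable [FiniteDimensional ℝ E] [BorelSpace E] [μ.IsAddHaarMeasure]

lemma measureReal_hull_le_of_diam_le (h𝒯 : IsMesh μ M 𝒯) (hS : S ∈ 𝒯) (hT : T ∈ 𝒯)
    (hdiam : Metric.diam (hull T) ≤ diamRatio μ M * Metric.diam (hull S)) :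
    μ.real (hull T) ≤ volRatio μ M * μ.real (hull S) := by
  have hball := ballVol_pos (μ := μ)
  have hratio := one_le_diamRatio μ M
  calc μ.real (hull T) ≤ ballVol μ * Metric.diam (hull T) ^ finrank ℝ E :=
        measureReal_hull_le (h𝒯.isShapeRegular T hT).nonempty
    _ ≤ ballVol μ * (diamRatio μ M * Metric.diam (hull S)) ^ finrank ℝ E := by gcongr
    _ = ballVol μ * diamRatio μ M ^ finrank ℝ E * Metric.diam (hull S) ^ finrank ℝ E := by ring
    _ ≤ ballVol μ * diamRatio μ M ^ finrank ℝ E * (M * μ.real (hull S)) := by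
        gcongr
        exact (h𝒯.isShapeRegular S hS).diam_pow_le
    _ = volRatio μ M * μ.real (hull S) := by rw [volRatio]; ring

lemma mem_patch_self (h𝒯 : IsMesh μ M 𝒯) (hT : T ∈ 𝒯) : T ∈ patch μ M 𝒯 T := by
  refine Finset.mem_filter.2 ⟨hT, ?_, h𝒯.measureReal_hull_le_of_diam_le hT hT ?_⟩
  · rw [Finset.inter_self]
    exact (h𝒯.isShapeRegular T hT).nonempty
  · exact le_mul_of_one_le_left Metric.diam_nonneg (one_le_diamRatio μ M)

variable [Nontrivial E]

lemma card_filter_mem_le (h𝒯 : IsMesh μ M 𝒯) (hM : 0 ≤ M) (x : E) :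
    (({T ∈ 𝒯 | x ∈ T} : Finset (Finset E)).card : ℝ) ≤ M * ballVol μ := by
  refine card_le_of_common_vertex (x := x) (fun T hT => (Finset.mem_filter.1 hT).2)
    (fun T hT => h𝒯.isShapeRegular T (Finset.mem_filter.1 hT).1) (fun S hS T hT hne => ?_) hM
  have hS := (Finset.mem_filter.1 hS).1
  have hT := (Finset.mem_filter.1 hT).1
  have hcard : S.card = T.card := by
    rw [(h𝒯.isShapeRegular S hS).card_eq, (h𝒯.isShapeRegular T hT).card_eq]
  obtain ⟨y, hyT, hyS⟩ := Finset.not_subset.1 fun hsub : T ⊆ S =>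
    hne (Finset.eq_of_subset_of_card_le hsub hcard.le).symm
  exact measure_mono_null (h𝒯.hull_inter_subset S hS T hT)
    ((h𝒯.isShapeRegular T hT).measure_hull_inter_eq_zero hyT hyS)

lemma card_filter_inter_nonempty_le (h𝒯 : IsMesh μ M 𝒯) (hM : 0 ≤ M) (hT : T ∈ 𝒯) :
    (({S ∈ 𝒯 | (S ∩ T).Nonempty} : Finset (Finset E)).card : ℝ) ≤
      (finrank ℝ E + 1) * (M * ballVol μ) := by
  have hsub : ({S ∈ 𝒯 | (S ∩ T).Nonempty} : Finset (Finset E)) ⊆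
      T.biUnion fun x => {S ∈ 𝒯 | x ∈ S} := fun S hS => by
    obtain ⟨hS, x, hx⟩ := Finset.mem_filter.1 hS
    rw [Finset.mem_inter] at hx
    exact Finset.mem_biUnion.2 ⟨x, hx.2, Finset.mem_filter.2 ⟨hS, hx.1⟩⟩
  calc (({S ∈ 𝒯 | (S ∩ T).Nonempty} : Finset (Finset E)).card : ℝ)
      ≤ ∑ x ∈ T, (({S ∈ 𝒯 | x ∈ S} : Finset (Finset E)).card : ℝ) := by
        exact_mod_cast (Finset.card_le_card hsub).trans Finset.card_biUnion_le
    _ ≤ ∑ _x ∈ T, M * ballVol μ := Finset.sum_le_sum fun x _ => h𝒯.card_filter_mem_le hM x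
    _ = _ := by
      rw [Finset.sum_const, (h𝒯.isShapeRegular T hT).card_eq, nsmul_eq_mul]
      push_cast
      ring

lemma diam_hull_le_of_card_inter (h𝒯 : IsMesh μ M 𝒯) (hE : 1 < finrank ℝ E) (hS : S ∈ 𝒯)
    (hST : (S ∩ T).card = finrank ℝ E) :
    Metric.diam (hull S) ≤ max 1 (gradConst μ M) * Metric.diam (hull T) := by
  obtain ⟨x, hx, y, hy, hxy⟩ := Finset.one_lt_card.1 (hE.trans_eq hST.symm)
  rw [Finset.mem_inter] at hx hy
  refine ((h𝒯.isShapeRegular S hS).diam_hull_le_dist hx.1 hy.1 hxy).trans ?_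
  gcongr
  · exact le_max_right _ _
  · exact dist_le_diam_hull (mem_hull_of_mem hx.2) (mem_hull_of_mem hy.2)

lemma diam_hull_le (h𝒯 : IsMesh μ M 𝒯) (hE : 1 < finrank ℝ E) (hσ : σ.Nonempty)
    (hS : S ∈ faceStar 𝒯 σ) (hT : T ∈ faceStar 𝒯 σ) :
    Metric.diam (hull S) ≤ diamRatio μ M * Metric.diam (hull T) := by
  have hM := (h𝒯.isShapeRegular S (mem_faceStar.1 hS).1).const_nonneg
  have hcard : (faceStar 𝒯 σ).card ≤ ⌊M * ballVol μ⌋₊ := by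
    obtain ⟨x, hx⟩ := hσ
    have hball := ballVol_pos (μ := μ)
    rw [Nat.le_floor_iff (by positivity)]
    refine le_trans ?_ (h𝒯.card_filter_mem_le hM x)
    exact_mod_cast Finset.card_le_card (faceStar_subset_filter_mem hx)
  have hle := le_pow_card_mul_of_reachable (h := fun X : faceStar 𝒯 σ => Metric.diam (hull X.1))
    (le_max_left 1 (gradConst μ M)) (fun _ => Metric.diam_nonneg)
    (fun X Y (hXY : (starGraph 𝒯 σ).Adj X Y) =>
      h𝒯.diam_hull_le_of_card_inter hE (mem_faceStar.1 X.2).1 hXY.2)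
    (h𝒯.preconnected_starGraph σ hσ ⟨S, hS⟩ ⟨T, hT⟩)
  rw [Fintype.card_coe] at hle
  exact hle.trans (mul_le_mul_of_nonneg_right (pow_le_pow_right₀ (le_max_left _ _) hcard)
    Metric.diam_nonneg)

lemma faceStar_subset_patch (h𝒯 : IsMesh μ M 𝒯) (hE : 1 < finrank ℝ E) (hσ : σ.Nonempty)
    (hT : T ∈ faceStar 𝒯 σ) : faceStar 𝒯 σ ⊆ patch μ M 𝒯 T := fun _ hS =>
  Finset.mem_filter.2 ⟨(mem_faceStar.1 hS).1,
    hσ.mono (Finset.subset_inter (mem_faceStar.1 hS).2 (mem_faceStar.1 hT).2),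
    h𝒯.measureReal_hull_le_of_diam_le (mem_faceStar.1 hS).1 (mem_faceStar.1 hT).1
      (h𝒯.diam_hull_le hE hσ hT hS)⟩

lemma card_patch_le (h𝒯 : IsMesh μ M 𝒯) (hM : 0 ≤ M) (hT : T ∈ 𝒯) :
    ((patch μ M 𝒯 T).card : ℝ) ≤ (finrank ℝ E + 1) * (M * ballVol μ) := by
  refine le_trans ?_ (h𝒯.card_filter_inter_nonempty_le hM hT)
  exact_mod_cast Finset.card_le_card patch_subset_filter_inter

lemma sum_sum_patch_le (h𝒯 : IsMesh μ M 𝒯) (hM : 0 ≤ M) {g : Finset E → ℝ} (hg : ∀ S, 0 ≤ g S) :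
    ∑ T ∈ 𝒯, ∑ S ∈ patch μ M 𝒯 T, g S ≤
      (finrank ℝ E + 1) * (M * ballVol μ) * ∑ S ∈ 𝒯, g S := by
  calc ∑ T ∈ 𝒯, ∑ S ∈ patch μ M 𝒯 T, g S
      ≤ ∑ T ∈ 𝒯, ∑ S ∈ 𝒯 with (S ∩ T).Nonempty, g S := Finset.sum_le_sum fun T _ =>
        Finset.sum_le_sum_of_subset_of_nonneg patch_subset_filter_inter fun S _ _ => hg S
    _ = ∑ S ∈ 𝒯, (({T ∈ 𝒯 | (T ∩ S).Nonempty} : Finset (Finset E)).card : ℝ) * g S := by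
        simp only [Finset.sum_filter]
        rw [Finset.sum_comm]
        refine Finset.sum_congr rfl fun S _ => ?_
        rw [← Finset.sum_filter, Finset.sum_const, nsmul_eq_mul]
        simp only [Finset.inter_comm S]
    _ ≤ ∑ S ∈ 𝒯, (finrank ℝ E + 1) * (M * ballVol μ) * g S := Finset.sum_le_sum fun S hS =>
        mul_le_mul_of_nonneg_right (h𝒯.card_filter_inter_nonempty_le hM hS) (hg S)
    _ = _ := (Finset.mul_sum _ _ _).symm

end IsMesh

end Mesh

/-! ### Common coefficients -/

section CommonCoefficients

variable {E : Type*} [NormedAddCommGroup E] [NormedSpace ℝ E] [MeasurableSpace E]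

/-- The sum of the mean errors over the patch of `T`, when `P S` is the form belonging to `S`. -/
noncomputable def patchError (μ : Measure E) (M p : ℝ) (v : E → ℝ) (𝒯 : Finset (Finset E))
    (P : Finset E → MvPolynomial E ℝ) (T : Finset E) : ℝ :=
  ∑ S ∈ patch μ M 𝒯 T, gradMean μ p (v - baryEval S (P S)) (hull S)

lemma patchError_nonneg (μ : Measure E) (M p : ℝ) (v : E → ℝ) (𝒯 : Finset (Finset E))
    (P : Finset E → MvPolynomial E ℝ) (T : Finset E) : 0 ≤ patchError μ M p v 𝒯 P T :=
  Finset.sum_nonneg fun _ _ => gradMean_nonneg μ p _ _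

variable [FiniteDimensional ℝ E] [BorelSpace E] {μ : Measure E} [μ.IsAddHaarMeasure] {M p : ℝ}
  {v : E → ℝ} {r : ℕ} {𝒯 : Finset (Finset E)} {P : Finset E → MvPolynomial E ℝ} {T : Finset E}

lemma IsMesh.localError_le_patchError (h𝒯 : IsMesh μ M 𝒯) (hT : T ∈ 𝒯) :
    localError μ p v T (P T) ≤ Metric.diam (hull T) * patchError μ M p v 𝒯 P T :=
  mul_le_mul_of_nonneg_left (Finset.single_le_sum
    (f := fun S => gradMean μ p (v - baryEval S (P S)) (hull S))
    (fun _ _ => gradMean_nonneg μ p _ _) (h𝒯.mem_patch_self hT)) Metric.diam_nonneg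

lemma IsMesh.sum_localError_faceStar_le [Nontrivial E] (h𝒯 : IsMesh μ M 𝒯)
    (hE : 1 < finrank ℝ E) {σ : Finset E} (hσ : σ.Nonempty) (hT : T ∈ faceStar 𝒯 σ) :
    ∑ S ∈ faceStar 𝒯 σ, localError μ p v S (P S) ≤
      diamRatio μ M * (Metric.diam (hull T) * patchError μ M p v 𝒯 P T) := by
  have hratio := one_le_diamRatio μ M
  calc ∑ S ∈ faceStar 𝒯 σ, localError μ p v S (P S)
      ≤ ∑ S ∈ faceStar 𝒯 σ, diamRatio μ M * Metric.diam (hull T) *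
          gradMean μ p (v - baryEval S (P S)) (hull S) := Finset.sum_le_sum fun S hS =>
        mul_le_mul_of_nonneg_right (h𝒯.diam_hull_le hE hσ hS hT) (gradMean_nonneg μ p _ _)
    _ ≤ ∑ S ∈ patch μ M 𝒯 T, diamRatio μ M * Metric.diam (hull T) *
          gradMean μ p (v - baryEval S (P S)) (hull S) :=
        Finset.sum_le_sum_of_subset_of_nonneg (h𝒯.faceStar_subset_patch hE hσ hT) fun S _ _ =>
          mul_nonneg (mul_nonneg (zero_le_one.trans hratio) Metric.diam_nonneg)
            (gradMean_nonneg μ p _ _)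
    _ = _ := by rw [← Finset.mul_sum, mul_assoc, patchError]

/-- The coefficient is taken from an arbitrary simplex of the star. -/
lemma exists_abs_coeff_sub_le_of_one_lt_finrank (hE : 1 < finrank ℝ E) (μ : Measure E)
    [μ.IsAddHaarMeasure] (M : ℝ) (r : ℕ) :
    ∃ C ≥ 0, ∀ (p : ℝ) (v : E → ℝ), 1 ≤ p → ContDiff ℝ 1 v → ∀ 𝒯, IsMesh μ M 𝒯 →
      ∀ P : Finset E → MvPolynomial E ℝ, (∀ T ∈ 𝒯, IsNormalizedForm μ v r T (P T)) →
      ∀ α : E →₀ ℕ, α ≠ 0 → ∃ c : ℝ, ∀ T ∈ 𝒯, α.support ⊆ T →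
        |(P T).coeff α - c| ≤ C * (Metric.diam (hull T) * patchError μ M p v 𝒯 P T) := by
  have : Nontrivial E := nontrivial_of_finrank_pos (zero_lt_one.trans hE)
  obtain ⟨C, hC, hjump⟩ := exists_abs_coeff_sub_le μ r
  refine ⟨2 * C * diamRatio μ M, by have := one_le_diamRatio μ M; positivity, ?_⟩
  intro p v hp hv 𝒯 h𝒯 P hP α hα
  rcases (faceStar 𝒯 α.support).eq_empty_or_nonempty with hempty | ⟨S, hS⟩
  · exact ⟨0, fun T hT hαT => absurd (mem_faceStar.2 ⟨hT, hαT⟩) (by simp [hempty])⟩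
  refine ⟨(P S).coeff α, fun T hT hαT => ?_⟩
  have hσ := Finsupp.support_nonempty_iff.2 hα
  have hTσ : T ∈ faceStar 𝒯 α.support := mem_faceStar.2 ⟨hT, hαT⟩
  have hadj (X Y : faceStar 𝒯 α.support) (hXY : (starGraph 𝒯 α.support).Adj X Y) :
      |(P X).coeff α - (P Y).coeff α| ≤
        C * localError μ p v X (P X) + C * localError μ p v Y (P Y) := by
    obtain ⟨hX, hαX⟩ := mem_faceStar.1 X.2
    obtain ⟨hY, hαY⟩ := mem_faceStar.1 Y.2
    exact hjump p v hp hv X Y (h𝒯.isShapeRegular X hX).toIsFullSimplex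
      (h𝒯.isShapeRegular Y hY).toIsFullSimplex hXY.2 _ _ (hP X hX) (hP Y hY) α
      (Finset.subset_inter hαX hαY)
  have hchain := abs_sub_le_two_mul_sum_of_reachable
    (fun X : faceStar 𝒯 α.support => mul_nonneg hC (localError_nonneg μ p v X (P X))) hadj
    (h𝒯.preconnected_starGraph _ hσ ⟨T, hTσ⟩ ⟨S, hS⟩)
  rw [Finset.sum_coe_sort _ fun X => C * localError μ p v X (P X), ← Finset.mul_sum] at hchain
  calc |(P T).coeff α - (P S).coeff α|
      ≤ 2 * (C * ∑ X ∈ faceStar 𝒯 α.support, localError μ p v X (P X)) := hchain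
    _ ≤ 2 * (C * (diamRatio μ M * (Metric.diam (hull T) * patchError μ M p v 𝒯 P T))) := by
        gcongr
        exact h𝒯.sum_localError_faceStar_le hE hσ hTσ
    _ = _ := by ring

/-- Neighbouring intervals need not be of comparable size.  There the values of `v` serve as
coefficients at the vertices, and every other coefficient belongs to a single interval. -/
lemma exists_abs_coeff_sub_le_of_finrank_eq_one (hE : finrank ℝ E = 1) (hp : 1 ≤ p)
    (hv : ContDiff ℝ 1 v) (h𝒯 : IsMesh μ M 𝒯) (hP : ∀ T ∈ 𝒯, IsNormalizedForm μ v r T (P T))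
    {α : E →₀ ℕ} (hα : α ≠ 0) (hα_degree : α.degree = r) : ∃ c : ℝ, ∀ T ∈ 𝒯, α.support ⊆ T →
      |(P T).coeff α - c| ≤ 10 * localError μ p v T (P T) := by
  rcases (Finsupp.support_nonempty_iff.2 hα).exists_eq_singleton_or_nontrivial with
    ⟨x, hx⟩ | hnontrivial
  · have hsingle : α = Finsupp.single x r := by
      rw [Finsupp.support_eq_singleton.1 hx |>.2] at hα_degree ⊢
      rw [← hα_degree, Finsupp.degree_single]
    refine ⟨v x, fun T hT hαT => ?_⟩
    rw [hsingle]
    exact (hP T hT).abs_sub_coeff_single_le hE (h𝒯.isShapeRegular T hT).toIsFullSimplex hv hp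
      (hαT (hx ▸ Finset.mem_singleton_self x))
  · refine ⟨(P α.support).coeff α, fun T hT hαT => ?_⟩
    have hsupport : α.support = T := by
      refine Finset.eq_of_subset_of_card_le hαT ?_
      rw [(h𝒯.isShapeRegular T hT).card_eq, hE]
      exact Finset.one_lt_card_iff_nontrivial.2 hnontrivial
    rw [hsupport, sub_self, abs_zero]
    exact mul_nonneg (by norm_num) (localError_nonneg μ p v T (P T))

variable [Nontrivial E]

lemma exists_abs_coeff_sub_le_patchError (μ : Measure E) [μ.IsAddHaarMeasure] (M : ℝ) (r : ℕ) :
    ∃ C ≥ 0, ∀ (p : ℝ) (v : E → ℝ), 1 ≤ p → ContDiff ℝ 1 v → ∀ 𝒯, IsMesh μ M 𝒯 →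
      ∀ P : Finset E → MvPolynomial E ℝ, (∀ T ∈ 𝒯, IsNormalizedForm μ v r T (P T)) →
      ∀ α : E →₀ ℕ, α ≠ 0 → α.degree = r → ∃ c : ℝ, ∀ T ∈ 𝒯, α.support ⊆ T →
        |(P T).coeff α - c| ≤ C * (Metric.diam (hull T) * patchError μ M p v 𝒯 P T) := by
  rcases (Nat.one_le_iff_ne_zero.2 (finrank_pos (R := ℝ) (M := E)).ne').eq_or_lt' with hE | hE
  · refine ⟨10, by norm_num, fun p v hp hv 𝒯 h𝒯 P hP α hα hα_degree => ?_⟩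
    obtain ⟨c, hc⟩ := exists_abs_coeff_sub_le_of_finrank_eq_one hE hp hv h𝒯 hP hα hα_degree
    exact ⟨c, fun T hT hαT => (hc T hT hαT).trans
      (mul_le_mul_of_nonneg_left (h𝒯.localError_le_patchError hT) (by norm_num))⟩
  · obtain ⟨C, hC, hbound⟩ := exists_abs_coeff_sub_le_of_one_lt_finrank hE μ M r
    exact ⟨C, hC, fun p v hp hv 𝒯 h𝒯 P hP α hα _ => hbound p v hp hv 𝒯 h𝒯 P hP α hα⟩

lemma exists_common_form (μ : Measure E) [μ.IsAddHaarMeasure] (M : ℝ) (r : ℕ) :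
    ∃ C ≥ 0, ∀ (p : ℝ) (v : E → ℝ), 1 ≤ p → ContDiff ℝ 1 v → ∀ 𝒯, IsMesh μ M 𝒯 →
      ∀ P : Finset E → MvPolynomial E ℝ, (∀ T ∈ 𝒯, IsNormalizedForm μ v r T (P T)) →
      ∃ Q : MvPolynomial E ℝ, Q.IsHomogeneous r ∧ ∀ T ∈ 𝒯, ∀ α ≠ 0, α.support ⊆ T →
        |(P T - Q).coeff α| ≤ C * (Metric.diam (hull T) * patchError μ M p v 𝒯 P T) := by
  obtain ⟨C, hC, hbound⟩ := exists_abs_coeff_sub_le_patchError μ M r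
  refine ⟨C, hC, fun p v hp hv 𝒯 h𝒯 P hP => ?_⟩
  choose! c hc using hbound p v hp hv 𝒯 h𝒯 P hP
  have hQ : (∑ α ∈ (𝒯.biUnion id).finsuppAntidiag r,
      MvPolynomial.monomial α (c α)).IsHomogeneous r :=
    MvPolynomial.IsHomogeneous.sum _ _ _ fun α hα =>
      MvPolynomial.isHomogeneous_monomial _ (Finset.mem_finsuppAntidiag'.1 hα).1
  refine ⟨_, hQ, fun T hT α hα hαT => ?_⟩
  by_cases hα_degree : α.degree = r
  · have hmem : α ∈ (𝒯.biUnion id).finsuppAntidiag r :=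
      Finset.mem_finsuppAntidiag'.2
        ⟨hα_degree, hαT.trans (Finset.subset_biUnion_of_mem id hT)⟩
    simpa [MvPolynomial.coeff_sum, MvPolynomial.coeff_monomial, hmem] using
      hc α hα hα_degree T hT hαT
  · rw [((hP T hT).isHomogeneous.sub hQ).coeff_eq_zero hα_degree, abs_zero]
    exact mul_nonneg hC (mul_nonneg Metric.diam_nonneg (patchError_nonneg μ M p v 𝒯 P T))

end CommonCoefficients

/-! ### The error estimate -/

section GradEnergy

variable {E F : Type*} [NormedAddCommGroup E] [NormedSpace ℝ E] [MeasurableSpace E] [BorelSpace E]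
  [NormedAddCommGroup F] [NormedSpace ℝ F] {μ : Measure E} [IsFiniteMeasureOnCompacts μ] {p e : ℝ}
  {u w : E → F} {K : Set E}

lemma gradEnergy_add_le (hp : 1 ≤ p) (hK : IsCompact K) (hu : ContDiff ℝ 1 u)
    (hw : Differentiable ℝ w) (he : ∀ y ∈ K, ‖fderiv ℝ w y‖ ≤ e) :
    gradEnergy μ p (u + w) K ≤ 2 ^ (p - 1) * (gradEnergy μ p u K + μ.real K * e ^ p) := by
  have hp_nonneg : 0 ≤ p := zero_le_one.trans hp
  have hint := integrableOn_norm_fderiv_rpow (μ := μ) hp_nonneg hK hu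
  have hconst : IntegrableOn (fun _ : E => e ^ p) K μ := integrableOn_const hK.measure_ne_top
  have hpointwise (y : E) (hy : y ∈ K) :
      ‖fderiv ℝ (u + w) y‖ ^ p ≤ 2 ^ (p - 1) * (‖fderiv ℝ u y‖ ^ p + e ^ p) := by
    rw [fderiv_add (hu.differentiable one_ne_zero y) (hw y)]
    calc ‖fderiv ℝ u y + fderiv ℝ w y‖ ^ p ≤ (‖fderiv ℝ u y‖ + e) ^ p :=
          Real.rpow_le_rpow (norm_nonneg _) (norm_add_le_of_le le_rfl (he y hy)) hp_nonneg
      _ ≤ 2 ^ (p - 1) * (‖fderiv ℝ u y‖ ^ p + e ^ p) :=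
          NNReal.coe_le_coe.2 (NNReal.rpow_add_le_mul_rpow_add_rpow ‖fderiv ℝ u y‖₊
            ⟨e, (norm_nonneg _).trans (he y hy)⟩ hp)
  calc gradEnergy μ p (u + w) K
      ≤ ∫ y in K, 2 ^ (p - 1) * (‖fderiv ℝ u y‖ ^ p + e ^ p) ∂μ :=
        integral_mono_of_nonneg
          (Filter.Eventually.of_forall fun _ => Real.rpow_nonneg (norm_nonneg _) _)
          ((hint.add hconst).const_mul _)
          ((ae_restrict_iff' hK.measurableSet).2 (Filter.Eventually.of_forall hpointwise))
    _ = 2 ^ (p - 1) * (gradEnergy μ p u K + μ.real K * e ^ p) := by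
        rw [integral_const_mul, integral_add hint hconst, setIntegral_const, smul_eq_mul,
          gradEnergy]

end GradEnergy

section ErrorEstimate

variable {E : Type*} [NormedAddCommGroup E] [NormedSpace ℝ E] [FiniteDimensional ℝ E]
  [MeasurableSpace E] [BorelSpace E] [Nontrivial E] {μ : Measure E} [μ.IsAddHaarMeasure] {M p : ℝ}
  {v : E → ℝ} {r : ℕ} {𝒯 : Finset (Finset E)} {P : Finset E → MvPolynomial E ℝ} {T : Finset E}

lemma IsShapeRegular.norm_fderiv_baryEval_le {Q : MvPolynomial E ℝ} {δ : ℝ} {y : E}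
    (hT : IsShapeRegular μ M T) (hQ : Q.IsHomogeneous r) (hδ : 0 ≤ δ)
    (hQδ : ∀ α ≠ 0, α.support ⊆ T → |Q.coeff α| ≤ Metric.diam (hull T) * δ) (hy : y ∈ hull T) :
    ‖fderiv ℝ (baryEval T Q) y‖ ≤
      (finrank ℝ E + r).choose r * r * gradConst μ M * δ := by
  have hdiam := hT.diam_hull_pos
  have hL : 0 ≤ gradConst μ M / Metric.diam (hull T) := by
    have := hT.const_nonneg
    have := ballVol_pos (μ := μ)
    unfold gradConst
    positivity
  calc ‖fderiv ℝ (baryEval T Q) y‖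
      ≤ (finrank ℝ E + r).choose r * (Metric.diam (hull T) * δ *
          (r * (gradConst μ M / Metric.diam (hull T)))) :=
        hT.toIsFullSimplex.norm_fderiv_baryEval_le hL hT.abs_linear_baryCoord_le hQ
          (mul_nonneg hdiam.le hδ) hQδ hy
    _ = (finrank ℝ E + r).choose r * r * gradConst μ M * δ := by
        field_simp

lemma IsMesh.measureReal_mul_patchError_rpow_le (h𝒯 : IsMesh μ M 𝒯) (hM : 0 ≤ M) (hp : 1 ≤ p)
    (hT : T ∈ 𝒯) :
    μ.real (hull T) * patchError μ M p v 𝒯 P T ^ p ≤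
      volRatio μ M * ((finrank ℝ E + 1) * (M * ballVol μ)) ^ (p - 1) *
        ∑ S ∈ patch μ M 𝒯 T, gradEnergy μ p (v - baryEval S (P S)) (hull S) := by
  have hp_pos : 0 < p := by linarith
  have hball := ballVol_pos (μ := μ)
  have henergy (S : Finset E) (hS : S ∈ patch μ M 𝒯 T) :
      μ.real (hull T) * gradMean μ p (v - baryEval S (P S)) (hull S) ^ p ≤
        volRatio μ M * gradEnergy μ p (v - baryEval S (P S)) (hull S) := by
    obtain ⟨hS, -, hvol⟩ := Finset.mem_filter.1 hS
    rw [← measureReal_mul_gradMean_rpow hp_pos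
      (h𝒯.isShapeRegular S hS).measureReal_hull_pos.ne', ← mul_assoc]
    exact mul_le_mul_of_nonneg_right hvol (Real.rpow_nonneg (gradMean_nonneg μ p _ _) p)
  calc μ.real (hull T) * patchError μ M p v 𝒯 P T ^ p
      ≤ μ.real (hull T) * ((patch μ M 𝒯 T).card ^ (p - 1) *
          ∑ S ∈ patch μ M 𝒯 T, gradMean μ p (v - baryEval S (P S)) (hull S) ^ p) := by
        gcongr
        exact Real.rpow_sum_le_const_mul_sum_rpow_of_nonneg _ hp
          fun S _ => gradMean_nonneg μ p _ _
    _ = (patch μ M 𝒯 T).card ^ (p - 1) * ∑ S ∈ patch μ M 𝒯 T,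
          μ.real (hull T) * gradMean μ p (v - baryEval S (P S)) (hull S) ^ p := by
        rw [← Finset.mul_sum]
        ring
    _ ≤ ((finrank ℝ E + 1) * (M * ballVol μ)) ^ (p - 1) * ∑ S ∈ patch μ M 𝒯 T,
          volRatio μ M * gradEnergy μ p (v - baryEval S (P S)) (hull S) := by
        refine mul_le_mul (Real.rpow_le_rpow (Nat.cast_nonneg _) (h𝒯.card_patch_le hM hT)
          (sub_nonneg.2 hp)) (Finset.sum_le_sum henergy) (Finset.sum_nonneg fun S _ => ?_)
          (by positivity)
        exact mul_nonneg measureReal_nonneg (Real.rpow_nonneg (gradMean_nonneg μ p _ _) p)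
    _ = _ := by
        rw [← Finset.mul_sum]
        ring

lemma IsMesh.gradEnergy_sub_baryEval_le (h𝒯 : IsMesh μ M 𝒯) (hM : 0 ≤ M) (hp : 1 ≤ p)
    (hv : ContDiff ℝ 1 v) (hT : T ∈ 𝒯) {Q : MvPolynomial E ℝ} {A : ℝ} (hA : 0 ≤ A)
    (hPQ : ∀ y ∈ hull T,
      ‖fderiv ℝ (baryEval T (P T - Q)) y‖ ≤ A * patchError μ M p v 𝒯 P T) :
    gradEnergy μ p (v - baryEval T Q) (hull T) ≤
      2 ^ (p - 1) * (gradEnergy μ p (v - baryEval T (P T)) (hull T) +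
        A ^ p * (volRatio μ M * ((finrank ℝ E + 1) * (M * ballVol μ)) ^ (p - 1) *
          ∑ S ∈ patch μ M 𝒯 T, gradEnergy μ p (v - baryEval S (P S)) (hull S))) := by
  have hsplit : v - baryEval T Q = (v - baryEval T (P T)) + baryEval T (P T - Q) := by
    ext y
    simp only [Pi.sub_apply, Pi.add_apply, baryEval_sub]
    ring
  have hsmooth : ContDiff ℝ 1 (v - baryEval T (P T)) := hv.sub (contDiff_baryEval T _)
  rw [hsplit]
  refine (gradEnergy_add_le hp (isCompact_hull T) hsmooth (differentiable_baryEval T _)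
    hPQ).trans ?_
  rw [Real.mul_rpow hA (patchError_nonneg μ M p v 𝒯 P T), mul_left_comm]
  have hpatch_le := h𝒯.measureReal_mul_patchError_rpow_le (v := v) (P := P) hM hp hT
  gcongr

lemma exists_sum_gradEnergy_sub_le_of_isNormalizedForm (μ : Measure E) [μ.IsAddHaarMeasure]
    (hM : 0 ≤ M) (r : ℕ) (hp : 1 ≤ p) :
    ∃ C > 0, ∀ v : E → ℝ, ContDiff ℝ 1 v → ∀ 𝒯, IsMesh μ M 𝒯 →
      ∀ P : Finset E → MvPolynomial E ℝ, (∀ T ∈ 𝒯, IsNormalizedForm μ v r T (P T)) →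
      ∃ Q : MvPolynomial E ℝ, Q.IsHomogeneous r ∧
        ∑ T ∈ 𝒯, gradEnergy μ p (v - baryEval T Q) (hull T) ≤
          C * ∑ T ∈ 𝒯, gradEnergy μ p (v - baryEval T (P T)) (hull T) := by
  obtain ⟨C, hC, hcommon⟩ := exists_common_form μ M r
  have hball := ballVol_pos (μ := μ)
  have hratio := one_le_diamRatio μ M
  set A : ℝ := (finrank ℝ E + r).choose r * r * gradConst μ M * C with hA
  set N : ℝ := (finrank ℝ E + 1) * (M * ballVol μ)
  have hA_nonneg : 0 ≤ A := by unfold A gradConst; positivity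
  have : 0 ≤ N := by unfold N; positivity
  have hvol : 0 ≤ volRatio μ M := by unfold volRatio; positivity
  refine ⟨2 ^ (p - 1) * (1 + A ^ p * (volRatio μ M * N ^ (p - 1) * N)), by positivity,
    fun v hv 𝒯 h𝒯 P hP => ?_⟩
  obtain ⟨Q, hQ, hPQ⟩ := hcommon p v hp hv 𝒯 h𝒯 P hP
  refine ⟨Q, hQ, ?_⟩
  have hgrad (T : Finset E) (hT : T ∈ 𝒯) (y : E) (hy : y ∈ hull T) :
      ‖fderiv ℝ (baryEval T (P T - Q)) y‖ ≤ A * patchError μ M p v 𝒯 P T := by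
    rw [hA, mul_assoc]
    exact (h𝒯.isShapeRegular T hT).norm_fderiv_baryEval_le ((hP T hT).isHomogeneous.sub hQ)
      (mul_nonneg hC (patchError_nonneg μ M p v 𝒯 P T))
      (fun α hα hαT => (hPQ T hT α hα hαT).trans_eq (by ring)) hy
  calc ∑ T ∈ 𝒯, gradEnergy μ p (v - baryEval T Q) (hull T)
      ≤ ∑ T ∈ 𝒯, 2 ^ (p - 1) * (gradEnergy μ p (v - baryEval T (P T)) (hull T) +
          A ^ p * (volRatio μ M * N ^ (p - 1) *
            ∑ S ∈ patch μ M 𝒯 T, gradEnergy μ p (v - baryEval S (P S)) (hull S))) :=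
        Finset.sum_le_sum fun T hT =>
          h𝒯.gradEnergy_sub_baryEval_le hM hp hv hT hA_nonneg (hgrad T hT)
    _ = 2 ^ (p - 1) * (∑ T ∈ 𝒯, gradEnergy μ p (v - baryEval T (P T)) (hull T) +
          A ^ p * (volRatio μ M * N ^ (p - 1) * ∑ T ∈ 𝒯,
            ∑ S ∈ patch μ M 𝒯 T, gradEnergy μ p (v - baryEval S (P S)) (hull S))) := by
        simp only [← Finset.mul_sum, Finset.sum_add_distrib]
    _ ≤ 2 ^ (p - 1) * (∑ T ∈ 𝒯, gradEnergy μ p (v - baryEval T (P T)) (hull T) +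
          A ^ p * (volRatio μ M * N ^ (p - 1) *
            (N * ∑ T ∈ 𝒯, gradEnergy μ p (v - baryEval T (P T)) (hull T)))) := by
        gcongr
        exact h𝒯.sum_sum_patch_le hM fun S => gradEnergy_nonneg μ p _ _
    _ = _ := by ring

lemma exists_sum_gradEnergy_sub_le (μ : Measure E) [μ.IsAddHaarMeasure] (hM : 0 ≤ M) (r : ℕ)
    (hp : 1 ≤ p) :
    ∃ C > 0, ∀ v : E → ℝ, ContDiff ℝ 1 v → ∀ 𝒯, IsMesh μ M 𝒯 →
      ∀ P : Finset E → MvPolynomial E ℝ, (∀ T ∈ 𝒯, (P T).IsHomogeneous r) →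
      ∃ Q : MvPolynomial E ℝ, Q.IsHomogeneous r ∧
        ∑ T ∈ 𝒯, gradEnergy μ p (v - baryEval T Q) (hull T) ≤
          C * ∑ T ∈ 𝒯, gradEnergy μ p (v - baryEval T (P T)) (hull T) := by
  obtain ⟨C, hC, hbound⟩ := exists_sum_gradEnergy_sub_le_of_isNormalizedForm μ hM r hp
  refine ⟨C, hC, fun v hv 𝒯 h𝒯 P hP => ?_⟩
  choose! P' hP' hP'_bound henergy using fun T hT =>
    (h𝒯.isShapeRegular T hT).exists_hasPoincareBound (μ := μ) (p := p) (hP T hT) hv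
  obtain ⟨Q, hQ, hQ_le⟩ := hbound v hv 𝒯 h𝒯 P' fun T hT => ⟨hP' T hT, hP'_bound T hT⟩
  exact ⟨Q, hQ, hQ_le.trans_eq (by rw [Finset.sum_congr rfl henergy])⟩

end ErrorEstimate

/-! ### Piecewise polynomials -/

section MvPolynomial

variable {σ τ R : Type*} [CommSemiring R]

lemma eval_aeval (c : σ → R) (g : τ → MvPolynomial σ R) (φ : MvPolynomial τ R) :
    MvPolynomial.eval c (MvPolynomial.aeval g φ) =
      MvPolynomial.eval (fun i => MvPolynomial.eval c (g i)) φ := by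
  simp only [← MvPolynomial.aeval_eq_eval]
  exact MvPolynomial.comp_aeval_apply g (MvPolynomial.aeval c) φ

lemma totalDegree_aeval_le {d : ℕ} {g : τ → MvPolynomial σ R} (hg : ∀ i, (g i).totalDegree ≤ d)
    (φ : MvPolynomial τ R) : (MvPolynomial.aeval g φ).totalDegree ≤ φ.totalDegree * d := by
  rw [MvPolynomial.aeval_def, MvPolynomial.eval₂_eq, MvPolynomial.algebraMap_eq]
  refine MvPolynomial.totalDegree_finsetSum_le fun α hα => ?_
  calc (MvPolynomial.C (φ.coeff α) * ∏ x ∈ α.support, g x ^ α x).totalDegree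
      ≤ (∏ x ∈ α.support, g x ^ α x).totalDegree :=
        (MvPolynomial.totalDegree_mul _ _).trans_eq (by simp)
    _ ≤ ∑ x ∈ α.support, (g x ^ α x).totalDegree := MvPolynomial.totalDegree_finsetProd _ _
    _ ≤ ∑ x ∈ α.support, α x * d := Finset.sum_le_sum fun x _ =>
        (MvPolynomial.totalDegree_pow _ _).trans (Nat.mul_le_mul_left _ (hg x))
    _ ≤ φ.totalDegree * d := by
        rw [← Finset.sum_mul]
        exact Nat.mul_le_mul_right _ (MvPolynomial.le_totalDegree hα)

end MvPolynomial

section PolyFun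

variable {ι : Type*} {T : Finset (EuclideanSpace ℝ ι)} {q : MvPolynomial ι ℝ} {r : ℕ}

/-- The function on Euclidean space given by a polynomial in the Cartesian coordinates. -/
noncomputable def polyFun (q : MvPolynomial ι ℝ) (y : EuclideanSpace ℝ ι) : ℝ :=
  MvPolynomial.eval (fun i => y i) q

-- The `i`-th Cartesian coordinate becomes `∑ xᵢ X_x`, and the missing degree is filled up with
-- powers of `∑ X_x`, which evaluates to `1`.
lemma IsFullSimplex.exists_isHomogeneous_baryEval_eq_polyFun (hT : IsFullSimplex T)
    (hq : q.totalDegree ≤ r) :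
    ∃ P : MvPolynomial (EuclideanSpace ℝ ι) ℝ, P.IsHomogeneous r ∧ baryEval T P = polyFun q := by
  let g (i : ι) : MvPolynomial (EuclideanSpace ℝ ι) ℝ :=
    ∑ x ∈ T, MvPolynomial.C (x i) * MvPolynomial.X x
  have hg (i : ι) : (g i).IsHomogeneous 1 :=
    MvPolynomial.IsHomogeneous.sum _ _ _ fun x _ => MvPolynomial.isHomogeneous_C_mul_X _ _
  have hone : (∑ x ∈ T, MvPolynomial.X (R := ℝ) x).IsHomogeneous 1 :=
    MvPolynomial.IsHomogeneous.sum _ _ _ fun x _ => MvPolynomial.isHomogeneous_X _ _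
  refine ⟨∑ k ∈ Finset.range (q.totalDegree + 1),
    MvPolynomial.aeval g (q.homogeneousComponent k) * (∑ x ∈ T, MvPolynomial.X x) ^ (r - k),
    MvPolynomial.IsHomogeneous.sum _ _ _ fun k hk => ?_, funext fun y => ?_⟩
  · have hk : k ≤ r := (Nat.lt_succ_iff.1 (Finset.mem_range.1 hk)).trans hq
    convert ((MvPolynomial.homogeneousComponent_isHomogeneous k q).aeval g hg).mul
      (hone.pow (r - k)) using 1
    omega
  · have heval (i : ι) : MvPolynomial.eval (fun x => baryCoord T x y) (g i) = y i := by
      conv_rhs => rw [← hT.sum_baryCoord_smul y]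
      simp [g, mul_comm]
    simp only [baryEval, map_sum, map_mul, map_pow, eval_aeval, heval, MvPolynomial.eval_X,
      hT.sum_baryCoord, one_pow, mul_one]
    rw [← map_sum, MvPolynomial.sum_homogeneousComponent, polyFun]

variable [Fintype ι]

lemma contDiff_polyFun (q : MvPolynomial ι ℝ) {k : WithTop ℕ∞} : ContDiff ℝ k (polyFun q) := by
  unfold polyFun
  simp only [MvPolynomial.eval_eq]
  refine ContDiff.sum fun α _ => contDiff_const.mul (contDiff_prod fun i _ => ContDiff.pow ?_ _)
  exact (EuclideanSpace.proj (𝕜 := ℝ) i).contDiff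

lemma exists_polyFun_eq_affineMap (ℓ : EuclideanSpace ℝ ι →ᵃ[ℝ] ℝ) :
    ∃ q : MvPolynomial ι ℝ, q.totalDegree ≤ 1 ∧ polyFun q = ℓ := by
  refine ⟨MvPolynomial.C (ℓ 0) +
    ∑ i, MvPolynomial.C (ℓ.linear (EuclideanSpace.single i 1)) * MvPolynomial.X i,
    (MvPolynomial.totalDegree_add _ _).trans (max_le (by simp) ?_), funext fun y => ?_⟩
  · exact MvPolynomial.totalDegree_finsetSum_le fun i _ =>
      (MvPolynomial.totalDegree_mul _ _).trans (by simp)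
  · have hy : ∑ i, y i • EuclideanSpace.single i (1 : ℝ) = y := by
      simpa using (EuclideanSpace.basisFun ι ℝ).sum_repr y
    calc _ = ℓ.linear (∑ i, y i • EuclideanSpace.single i (1 : ℝ)) + ℓ 0 := by
          simp [polyFun, mul_comm, add_comm]
      _ = ℓ y := by simpa [hy] using (congrFun (AffineMap.decomp ℓ) y).symm

end PolyFun

lemma exists_polyFun_eq_baryEval {ι : Type*} [Finite ι] (T : Finset (EuclideanSpace ℝ ι))
    (P : MvPolynomial (EuclideanSpace ℝ ι) ℝ) :
    ∃ q : MvPolynomial ι ℝ, q.totalDegree ≤ P.totalDegree ∧ polyFun q = baryEval T P := by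
  have := Fintype.ofFinite ι
  choose a ha ha_eval using fun x => exists_polyFun_eq_affineMap (baryCoord T x)
  refine ⟨MvPolynomial.aeval a P, (totalDegree_aeval_le ha P).trans_eq (mul_one _),
    funext fun y => ?_⟩
  simp only [polyFun, funext_iff] at ha_eval
  simp only [polyFun, baryEval, eval_aeval, ha_eval]

section Gluing

variable {E : Type*} [NormedAddCommGroup E] [NormedSpace ℝ E] [FiniteDimensional ℝ E]
  [MeasurableSpace E] {μ : Measure E} {M : ℝ} {𝒯 : Finset (Finset E)}

lemma IsMesh.exists_continuousOn_eqOn_baryEval (h𝒯 : IsMesh μ M 𝒯) (Q : MvPolynomial E ℝ) :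
    ∃ w : E → ℝ, ContinuousOn w (⋃ T ∈ 𝒯, hull T) ∧
      ∀ T ∈ 𝒯, Set.EqOn w (baryEval T Q) (hull T) := by
  have hsingle (y : E) : ∃ t, ∀ T ∈ 𝒯, y ∈ hull T → t = baryEval T Q y := by
    by_cases hy : ∃ S ∈ 𝒯, y ∈ hull S
    · obtain ⟨S, hS, hyS⟩ := hy
      exact ⟨baryEval S Q y, fun T hT hyT => baryEval_eq_of_mem_hull_inter
        (h𝒯.isShapeRegular S hS).toIsFullSimplex (h𝒯.isShapeRegular T hT).toIsFullSimplex
        (h𝒯.hull_inter_subset S hS T hT ⟨hyS, hyT⟩) Q⟩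
    · exact ⟨0, fun T hT hyT => absurd ⟨T, hT, hyT⟩ hy⟩
  choose w hw using hsingle
  refine ⟨w, ?_, fun T hT y hy => hw y T hT hy⟩
  rw [← Finset.set_biUnion_coe, Set.biUnion_eq_iUnion]
  exact (locallyFinite_of_finite _).continuousOn_iUnion
    (fun T => (isCompact_hull T.1).isClosed) fun T =>
      (contDiff_baryEval T.1 Q (k := 0)).continuous.continuousOn.congr fun y hy => hw y T T.2 hy

end Gluing

section Conforming

variable {ι : Type*} [Fintype ι] [Nonempty ι] {M p : ℝ}

lemma exists_continuousOn_sum_gradEnergy_sub_le (μ : Measure (EuclideanSpace ℝ ι))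
    [μ.IsAddHaarMeasure] (hM : 0 ≤ M) (r : ℕ) (hp : 1 ≤ p) :
    ∃ C > 0, ∀ v : EuclideanSpace ℝ ι → ℝ, ContDiff ℝ 1 v → ∀ 𝒯, IsMesh μ M 𝒯 →
      ∀ q : Finset (EuclideanSpace ℝ ι) → MvPolynomial ι ℝ, (∀ T ∈ 𝒯, (q T).totalDegree ≤ r) →
      ∃ (w : EuclideanSpace ℝ ι → ℝ) (q' : Finset (EuclideanSpace ℝ ι) → MvPolynomial ι ℝ),
        ContinuousOn w (⋃ T ∈ 𝒯, hull T) ∧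
        (∀ T ∈ 𝒯, (q' T).totalDegree ≤ r ∧ Set.EqOn w (polyFun (q' T)) (hull T)) ∧
        ∑ T ∈ 𝒯, gradEnergy μ p (v - polyFun (q' T)) (hull T) ≤
          C * ∑ T ∈ 𝒯, gradEnergy μ p (v - polyFun (q T)) (hull T) := by
  obtain ⟨C, hC, hbound⟩ := exists_sum_gradEnergy_sub_le μ hM r hp
  refine ⟨C, hC, fun v hv 𝒯 h𝒯 q hq => ?_⟩
  choose! P hP hPq using fun T hT =>
    (h𝒯.isShapeRegular T hT).exists_isHomogeneous_baryEval_eq_polyFun (hq T hT)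
  obtain ⟨Q, hQ, hQ_le⟩ := hbound v hv 𝒯 h𝒯 P hP
  obtain ⟨w, hw, hwQ⟩ := h𝒯.exists_continuousOn_eqOn_baryEval Q
  choose q' hq' hq'Q using fun T => exists_polyFun_eq_baryEval T Q
  refine ⟨w, q', hw, fun T hT => ⟨(hq' T).trans hQ.totalDegree_le, by rw [hq'Q]; exact hwQ T hT⟩,
    ?_⟩
  simp only [hq'Q]
  exact hQ_le.trans_eq (by rw [Finset.sum_congr rfl fun T hT => by rw [hPq T hT]])

end Conforming

section Extension

variable {E F : Type*} [NormedAddCommGroup E] [NormedSpace ℝ E] [FiniteDimensional ℝ E]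
  [NormedAddCommGroup F] [NormedSpace ℝ F] {A U : Set E} {v : E → F}

lemma exists_contDiff_fderiv_eqOn (hA : IsClosed A) (hU : IsOpen U) (hAU : A ⊆ U)
    (hv : ContDiffOn ℝ 1 v U) :
    ∃ u : E → F, ContDiff ℝ 1 u ∧ Set.EqOn (fderiv ℝ u) (fderiv ℝ v) A := by
  obtain ⟨f, hf_zero, hf_one, -⟩ := exists_contMDiffMap_zero_one_nhds_of_isClosed (n := 1)
    (modelWithCornersSelf ℝ E) hU.isClosed_compl hA (Set.disjoint_compl_left_iff_subset.2 hAU)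
  have hf : ContDiff ℝ 1 f := f.contMDiff.contDiff
  refine ⟨fun y => f y • v y, contDiff_iff_contDiffAt.2 fun y => ?_, fun y hy => ?_⟩
  · by_cases hy : y ∈ U
    · exact hf.contDiffAt.smul (hv.contDiffAt (hU.mem_nhds hy))
    · refine (contDiffAt_const (c := (0 : F))).congr_of_eventuallyEq ?_
      filter_upwards [hf_zero.filter_mono (nhds_le_nhdsSet (Set.mem_compl hy))] with z hz
      rw [hz, zero_smul]
  · refine Filter.EventuallyEq.fderiv_eq ?_
    filter_upwards [hf_one.filter_mono (nhds_le_nhdsSet hy)] with z hz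
    rw [hz, one_smul]

end Extension

lemma le_rpow_mul_sum_sInf_rpow {ι : Type*} {s : Finset ι} {A : ι → Set ℝ} {a C e : ℝ}
    (hC : 0 ≤ C) (he : 0 ≤ e) (hA : ∀ i ∈ s, (A i).Nonempty) (hA_nonneg : ∀ i ∈ s, ∀ t ∈ A i, 0 ≤ t)
    (h : ∀ f : ι → ℝ, (∀ i ∈ s, f i ∈ A i) → a ≤ (C * ∑ i ∈ s, f i) ^ e) :
    a ≤ C ^ e * (∑ i ∈ s, sInf (A i)) ^ e := by
  choose! f _ hf_lim hf using fun i hi => exists_seq_tendsto_sInf (hA i hi) ⟨0, hA_nonneg i hi⟩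
  have hlim : Filter.Tendsto (fun k => (C * ∑ i ∈ s, f i k) ^ e) Filter.atTop
      (nhds ((C * ∑ i ∈ s, sInf (A i)) ^ e)) :=
    ((tendsto_finsetSum _ hf_lim).const_mul C).rpow_const (Or.inr he)
  rw [← Real.mul_rpow hC (Finset.sum_nonneg fun i hi => Real.sInf_nonneg (hA_nonneg i hi))]
  exact ge_of_tendsto' hlim fun k => h (fun i => f i k) fun i hi => hf i hi k

/-! ### Simplicial complexes -/

section Complex

variable {E : Type*} [NormedAddCommGroup E] [NormedSpace ℝ E]
  {K : Geometry.SimplicialComplex ℝ E} {S T : Finset E} {m : ℕ}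

/-- The faces of dimension `m - 1` of a finite simplicial complex. -/
noncomputable def facesOfCard (hK : K.faces.Finite) (m : ℕ) : Finset (Finset E) :=
  hK.toFinset.filter fun s => s.card = m

lemma mem_facesOfCard (hK : K.faces.Finite) : T ∈ facesOfCard hK m ↔ T ∈ K.faces ∧ T.card = m := by
  simp [facesOfCard]

lemma hull_inter_subset_of_mem_faces (hS : S ∈ K.faces) (hT : T ∈ K.faces) :
    hull S ∩ hull T ⊆ hull (S ∩ T) := by
  rw [hull, hull, hull, Finset.coe_inter]
  exact K.inter_subset_convexHull hS hT

lemma isClosed_biUnion_hull (𝒯 : Finset (Finset E)) : IsClosed (⋃ T ∈ 𝒯, hull T) :=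
  isClosed_biUnion_finset fun T _ => (isCompact_hull T).isClosed

variable [FiniteDimensional ℝ E]

lemma isFullSimplex_of_mem_faces (hT : T ∈ K.faces) (hcard : T.card = finrank ℝ E + 1) :
    IsFullSimplex T :=
  .of_card (K.indep hT) hcard

lemma hull_subset_closure_interior_space (hT : T ∈ K.faces) (hcard : T.card = finrank ℝ E + 1) :
    hull T ⊆ closure (interior K.space) := by
  have hinterior := (isFullSimplex_of_mem_faces hT hcard).interior_hull_nonempty
  calc hull T ⊆ closure (hull T) := subset_closure
    _ = closure (interior (hull T)) :=
        ((convex_convexHull ℝ _).closure_interior_eq_closure_of_nonempty_interior hinterior).symm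
    _ ⊆ closure (interior K.space) := closure_mono (interior_mono (K.convexHull_subset_space hT))

variable [MeasurableSpace E] [BorelSpace E] (μ : Measure E) [μ.IsAddHaarMeasure]

lemma measure_hull_eq_zero_of_card_ne (hT : T ∈ K.faces) (hcard : T.card ≠ finrank ℝ E + 1) :
    μ (hull T) = 0 := by
  refine measure_mono_null (convexHull_subset_affineSpan _) (Measure.addHaar_affineSubspace μ _ ?_)
  exact fun htop => hcard (IsFullSimplex.card_eq ⟨K.indep hT, htop⟩)

-- The lower-dimensional faces form a closed null set, which does not contribute to the interior.
lemma closure_interior_space_subset (hK : K.faces.Finite) :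
    closure (interior K.space) ⊆ ⋃ T ∈ facesOfCard hK (finrank ℝ E + 1), hull T := by
  set 𝒩 := hK.toFinset.filter fun s => s.card ≠ finrank ℝ E + 1
  have hnull : Measure.addHaar (⋃ T ∈ 𝒩, hull T) = 0 :=
    (measure_biUnion_null_iff 𝒩.countable_toSet).2 fun T hT => by
      obtain ⟨hT, hcard⟩ := Finset.mem_filter.1 hT
      exact measure_hull_eq_zero_of_card_ne _ (hK.mem_toFinset.1 hT) hcard
  have hspace : K.space = (⋃ T ∈ facesOfCard hK (finrank ℝ E + 1), hull T) ∪ ⋃ T ∈ 𝒩, hull T := by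
    rw [← Finset.set_biUnion_union, facesOfCard, Finset.filter_union_filter_not_eq]
    simp [Geometry.SimplicialComplex.space]
  rw [hspace, interior_union_isClosed_of_interior_empty (isClosed_biUnion_hull _)
    (Measure.interior_eq_empty_of_null hnull)]
  exact closure_minimal interior_subset (isClosed_biUnion_hull _)

end Complex

section ShapeMeasure

open scoped NNReal

variable {E : Type*} [NormedAddCommGroup E] [NormedSpace ℝ E] [MeasurableSpace E] {μ : Measure E}
  {M : ℝ} {T : Finset E}

lemma IsShapeRegular.of_nnreal_smul {c : ℝ≥0} (hT : IsShapeRegular (c • μ) M T) :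
    IsShapeRegular μ (M * c) T :=
  ⟨hT.toIsFullSimplex, hT.diam_pow_le.trans_eq (by simp [mul_assoc])⟩

variable [FiniteDimensional ℝ E] [BorelSpace E]

lemma IsFullSimplex.isShapeRegular_hausdorffMeasure (hT : IsFullSimplex T)
    (hM : Metric.diam (hull T) ^ (T.card - 1) / (μH[(T.card : ℝ) - 1] (hull T)).toReal ≤ M) :
    IsShapeRegular μH[finrank ℝ E] M T := by
  refine ⟨hT, ?_⟩
  rw [hT.card_eq] at hM
  push_cast at hM
  rw [add_sub_cancel_right] at hM
  exact (div_le_iff₀ (hT.measureReal_hull_pos (μ := μH[finrank ℝ E]))).1 hM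

lemma exists_hausdorffMeasure_eq_nnreal_smul (μ : Measure E) [μ.IsAddHaarMeasure] :
    ∃ c : ℝ≥0, (μH[finrank ℝ E] : Measure E) = c • μ :=
  ⟨_, Measure.isAddLeftInvariant_eq_smul _ _⟩

end ShapeMeasure

section FaceConnected

variable {n : ℕ} {K : Geometry.SimplicialComplex ℝ (EuclideanSpace ℝ (Fin n))}

lemma preconnected_starGraph_facesOfCard (hfin : K.faces.Finite) (hK : FaceConnected n K)
    {σ : Finset (EuclideanSpace ℝ (Fin n))} (hσ : σ.Nonempty) :
    (starGraph (facesOfCard hfin (n + 1)) σ).Preconnected := by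
  rintro ⟨S, hS⟩ ⟨T, hT⟩
  obtain ⟨hS, hσS⟩ := mem_faceStar.1 hS
  obtain ⟨hT, hσT⟩ := mem_faceStar.1 hT
  rw [mem_facesOfCard] at hS hT
  obtain ⟨x, hx⟩ := hσ
  obtain ⟨N, c, rfl, rfl, hc, hadj⟩ := hK S T hS.1 hT.1 hS.2 hT.2
    ⟨x, mem_hull_of_mem (hσS hx), mem_hull_of_mem (hσT hx)⟩
  have hσc (i : Fin (N + 1)) : σ ⊆ c i := by
    refine Fin.cases hσS (fun i => ?_) i
    exact (Finset.subset_inter hσS hσT).trans ((hadj i).2.trans Finset.inter_subset_right)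
  let V (i : Fin (N + 1)) : faceStar (facesOfCard hfin (n + 1)) σ :=
    ⟨c i, mem_faceStar.2 ⟨(mem_facesOfCard hfin).2 (hc i), hσc i⟩⟩
  have hreachable (i : Fin (N + 1)) : (starGraph _ σ).Reachable (V 0) (V i) := by
    induction i using Fin.induction with
    | zero => rfl
    | succ i ih =>
      refine ih.trans (SimpleGraph.Adj.reachable ⟨fun heq => ?_, ?_⟩)
      · have hcard := (hadj i).1
        rw [show c i.castSucc = c i.succ from congrArg Subtype.val heq, Finset.inter_self,
          (hc i.succ).2] at hcard
        omega
      · rw [finrank_euclideanSpace_fin]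
        convert (hadj i).1
  exact hreachable (Fin.last N)

lemma exists_isMesh_facesOfCard (μ : Measure (EuclideanSpace ℝ (Fin n))) [μ.IsAddHaarMeasure] :
    ∃ κ : NNReal, ∀ (K : Geometry.SimplicialComplex ℝ (EuclideanSpace ℝ (Fin n)))
      (hfin : K.faces.Finite) (M : ℝ), FaceConnected n K →
      (∀ T ∈ K.faces, T.card = n + 1 →
        Metric.diam (hull T) ^ (T.card - 1) / (μH[(T.card : ℝ) - 1] (hull T)).toReal ≤ M) →
      IsMesh μ (M * κ) (facesOfCard hfin (n + 1)) := by
  obtain ⟨κ, hκ⟩ := exists_hausdorffMeasure_eq_nnreal_smul μ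
  refine ⟨κ, fun K hfin M hK hshape => ⟨fun T hT => ?_, fun S hS T hT => ?_, fun _ hσ =>
    preconnected_starGraph_facesOfCard hfin hK hσ⟩⟩
  · obtain ⟨hT, hcard⟩ := (mem_facesOfCard hfin).1 hT
    refine .of_nnreal_smul (hκ ▸ IsFullSimplex.isShapeRegular_hausdorffMeasure ?_
      (hshape T hT hcard))
    exact isFullSimplex_of_mem_faces hT (by rwa [finrank_euclideanSpace_fin])
  · exact hull_inter_subset_of_mem_faces ((mem_facesOfCard hfin).1 hS).1
      ((mem_facesOfCard hfin).1 hT).1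

end FaceConnected

end BrambleHilbert

open BrambleHilbert in
theorem broken_bramble_hilbert_general
    (n : ℕ) (hn : 1 ≤ n) (p : ℝ) (hp : 1 ≤ p) (r : ℕ) (μ₀ : ℝ) (hμ₀ : 0 < μ₀) :
    ∃ C > 0,
      ∀ K : Geometry.SimplicialComplex ℝ (EuclideanSpace ℝ (Fin n)),
      ∀ hKfin : K.faces.Finite,
        FaceConnected n K →
        (∀ s ∈ K.faces, s.card = n + 1 →
          Metric.diam (hull s) ^ (s.card - 1) / (μH[((s.card : ℝ) - 1)] (hull s)).toReal ≤ μ₀) →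
        ∀ v : EuclideanSpace ℝ (Fin n) → ℝ,
          (∃ U : Set (EuclideanSpace ℝ (Fin n)), IsOpen U ∧ closure (interior K.space) ⊆ U ∧
            ContDiffOn ℝ 1 v U) →
          sInf {t : ℝ | ∃ (w : EuclideanSpace ℝ (Fin n) → ℝ)
              (q : Finset (EuclideanSpace ℝ (Fin n)) → MvPolynomial (Fin n) ℝ),
              ContinuousOn w (closure (interior K.space)) ∧
              (∀ s ∈ K.faces, s.card = n + 1 →
                (q s).totalDegree ≤ r ∧ Set.EqOn w (polyFun (q s)) (hull s)) ∧
              t = (∑ s ∈ facesOfCard hKfin (n + 1),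
                ∫ y in hull s, ‖fderiv ℝ v y - fderiv ℝ (polyFun (q s)) y‖ ^ p) ^ (1 / p)} ≤
            C * (∑ s ∈ facesOfCard hKfin (n + 1),
              sInf {t : ℝ | ∃ q₀ : MvPolynomial (Fin n) ℝ, q₀.totalDegree ≤ r ∧
                t = ∫ y in hull s, ‖fderiv ℝ v y - fderiv ℝ (polyFun q₀) y‖ ^ p}) ^ (1 / p) := by
  obtain ⟨κ, hmesh⟩ := exists_isMesh_facesOfCard (volume : Measure (EuclideanSpace ℝ (Fin n)))
  have : Nonempty (Fin n) := Fin.pos_iff_nonempty.1 hn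
  obtain ⟨C, hC, hbound⟩ := exists_continuousOn_sum_gradEnergy_sub_le
    (volume : Measure (EuclideanSpace ℝ (Fin n))) (M := μ₀ * κ) (by positivity) r hp
  refine ⟨C ^ (1 / p), by positivity, fun K hKfin hconn hshape v ⟨U, hU, hΩU, hv⟩ => ?_⟩
  obtain ⟨u, hu, huv⟩ := exists_contDiff_fderiv_eqOn isClosed_closure hU hΩU hv
  have henergy (q : Finset (EuclideanSpace ℝ (Fin n)) → MvPolynomial (Fin n) ℝ) :
      ∑ s ∈ facesOfCard hKfin (n + 1),
        ∫ y in hull s, ‖fderiv ℝ v y - fderiv ℝ (polyFun (q s)) y‖ ^ p =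
      ∑ s ∈ facesOfCard hKfin (n + 1), gradEnergy volume p (u - polyFun (q s)) (hull s) :=
    Finset.sum_congr rfl fun s hs => setIntegral_norm_fderiv_sub_rpow
      (isCompact_hull s).measurableSet (hu.differentiable one_ne_zero)
      ((contDiff_polyFun _).differentiable one_ne_zero)
      (huv.mono (hull_subset_closure_interior_space ((mem_facesOfCard hKfin).1 hs).1
        (by simpa using ((mem_facesOfCard hKfin).1 hs).2)))
  refine le_rpow_mul_sum_sInf_rpow hC.le (by positivity) (fun s _ => ⟨_, 0, by simp, rfl⟩)
    (by rintro s - t ⟨q, -, rfl⟩; positivity) fun f hf => ?_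
  choose! q hq hfq using hf
  obtain ⟨w, q', hw, hwq', hle⟩ := hbound u hu _ (hmesh K hKfin μ₀ hconn hshape) q hq
  refine le_trans (csInf_le ⟨0, by rintro - ⟨w, q, -, -, rfl⟩; positivity⟩ ⟨w, q', ?_,
    fun s hs hcard => hwq' s ((mem_facesOfCard hKfin).2 ⟨hs, hcard⟩), rfl⟩)
    (Real.rpow_le_rpow (by positivity) ?_ (by positivity))
  · exact hw.mono (by simpa using closure_interior_space_subset hKfin)
  · rw [Finset.sum_congr rfl hfq, henergy, henergy]
    exact hle

/-- **Broken Bramble–Hilbert lemma in the `W^{1,p}` seminorm.**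
For `n ≥ 1`, `p ∈ [1,∞)`, `r ≥ 1` and `μ₀ > 0` there is `C > 0`, depending only
on `n, p, r, μ₀`, such that for every finite, face-connected simplicial complex
`𝒯` in `ℝⁿ` in which every simplex is a face of an `n`-simplex and every simplex
has shape measure at most `μ₀`, with `Ω` the interior of the union of its
simplices, and every `C¹` function `v` on a neighborhood of the closure of `Ω`:
the best approximation error of `v` in the broken `W^{1,p}` seminorm by
continuous piecewise polynomials of degree ≤ r is at most `C` times the best
approximation error by fully discontinuous piecewise polynomials of degree ≤ r. -/
theorem broken_bramble_hilbert
    (n : ℕ) (hn : 1 ≤ n) (p : ℝ) (hp : 1 ≤ p) (r : ℕ) (hr : 1 ≤ r)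
    (μ₀ : ℝ) (hμ₀ : 0 < μ₀) :
    ∃ C > 0,
      ∀ K : Geometry.SimplicialComplex ℝ (EuclideanSpace ℝ (Fin n)),
      ∀ hKfin : K.faces.Finite,
        FaceConnected n K →
        (∀ s ∈ K.faces, ∃ t ∈ K.faces, t.card = n + 1 ∧ s ⊆ t) →
        (∀ s ∈ K.faces,
          Metric.diam (convexHull ℝ (s : Set (EuclideanSpace ℝ (Fin n)))) ^ (s.card - 1) /
            (μH[((s.card : ℝ) - 1)]
              (convexHull ℝ (s : Set (EuclideanSpace ℝ (Fin n))))).toReal ≤ μ₀) →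
        ∀ v : EuclideanSpace ℝ (Fin n) → ℝ,
          (∃ U : Set (EuclideanSpace ℝ (Fin n)), IsOpen U ∧
            closure (interior (⋃ s ∈ K.faces,
              convexHull ℝ (s : Set (EuclideanSpace ℝ (Fin n))))) ⊆ U ∧
            ContDiffOn ℝ 1 v U) →
          sInf {t : ℝ | ∃ (w : EuclideanSpace ℝ (Fin n) → ℝ)
              (q : Finset (EuclideanSpace ℝ (Fin n)) → MvPolynomial (Fin n) ℝ),
              ContinuousOn w (closure (interior (⋃ s ∈ K.faces,
                convexHull ℝ (s : Set (EuclideanSpace ℝ (Fin n)))))) ∧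
              (∀ s ∈ K.faces, s.card = n + 1 →
                (q s).totalDegree ≤ r ∧
                ∀ y ∈ convexHull ℝ (s : Set (EuclideanSpace ℝ (Fin n))),
                  w y = MvPolynomial.eval (fun i => y i) (q s)) ∧
              t = (∑ s ∈ hKfin.toFinset.filter (fun s => s.card = n + 1),
                    ∫ y in convexHull ℝ (s : Set (EuclideanSpace ℝ (Fin n))),
                      ‖fderiv ℝ v y -
                        fderiv ℝ (fun z => MvPolynomial.eval (fun i => z i) (q s)) y‖ ^ p) ^
                  (1 / p)} ≤
            C * (∑ s ∈ hKfin.toFinset.filter (fun s => s.card = n + 1),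
                  sInf {t : ℝ | ∃ q₀ : MvPolynomial (Fin n) ℝ, q₀.totalDegree ≤ r ∧
                    t = ∫ y in convexHull ℝ (s : Set (EuclideanSpace ℝ (Fin n))),
                      ‖fderiv ℝ v y -
                        fderiv ℝ (fun z => MvPolynomial.eval (fun i => z i) q₀) y‖ ^ p}) ^
                (1 / p) := by
  obtain ⟨C, hC, h⟩ := broken_bramble_hilbert_general n hn p hp r μ₀ hμ₀
  exact ⟨C, hC, fun K hKfin hconn _ hshape => h K hKfin hconn fun s hs _ => hshape s hs⟩
end

section
/- Let n ≥ 2. Define the parametric annulus Â = { x ∈ ℝⁿ : 1/2 < ‖x‖₁ < 1 } (where ‖x‖₁ = Σ|xᵢ| is the ℓ¹ norm) and the physical annulus Ă = { x ∈ ℝⁿ : 1/2 < ‖x‖₂ < 1 } (where ‖x‖₂ is the Euclidean norm). Then the map Φ : Â → ℝⁿ, Φ(x) = ( ‖x‖₁ / ‖x‖₂ ) · x, is a bijection from Â onto Ă, and both Φ and its inverse are Lipschitz continuous; in particular, Φ is a bi-Lipschitz homeomorphism from the Manhattan-metric annulus onto the Euclidean annulus. -/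
/-!
Let `p`, `q` be positively homogeneous Lipschitz functions bounded below by a positive multiple
of the norm. Moving each `x` along its ray by the factor `ρ x = p x / q x` takes it to the point
of that ray whose `q`-level is `p x`, so exchanging `p` and `q` inverts the map, and it carries
level sets of `p` to level sets of `q`. The factor `ρ` is bounded, and
`(ρ x - ρ y) * q y = (p x - p y) + ρ x * (q y - q x)`.
Since `‖y‖` is at most a multiple of `q y`, this controls `(ρ x - ρ y) • y` by `‖x - y‖`; hence
the map is Lipschitz on the whole space.
-/

open Set Function
open scoped NNReal

/-- The map moving `x` along its ray so that its `q`-level becomes `p x`. Where `q x = 0`, the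
value is `0` by the convention for division. -/
noncomputable def radialRescale {E : Type*} [SMul ℝ E] (p q : E → ℝ) (x : E) : E :=
  (p x / q x) • x

lemma abs_div_le_of_abs_le_mul {𝕜 : Type*} [Field 𝕜] [LinearOrder 𝕜] [IsStrictOrderedRing 𝕜]
    {r s M : 𝕜} (hM : 0 ≤ M) (h : |r| ≤ M * |s|) : |r / s| ≤ M := by
  rw [abs_div]
  exact div_le_of_le_mul₀ (abs_nonneg s) hM h

lemma abs_div_sub_div_mul_abs_le {X : Type*} [PseudoMetricSpace X] {p q : X → ℝ} {a c M : ℝ≥0}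
    (hp : LipschitzWith a p) (hq : LipschitzWith c q) (hpq : ∀ x, |p x| ≤ M * |q x|) (x y : X) :
    |p x / q x - p y / q y| * |q y| ≤ (a + M * c) * dist x y := by
  have ratio_mul (z : X) : p z / q z * q z = p z :=
    div_mul_cancel_of_imp fun h => by simpa [h] using hpq z
  have ratio_sub_mul :
      (p x / q x - p y / q y) * q y = (p x - p y) + p x / q x * (q y - q x) := by
    linear_combination ratio_mul x - ratio_mul y
  have hp_sub : |p x - p y| ≤ a * dist x y := hp.dist_le_mul x y
  have hq_sub : |q y - q x| ≤ c * dist x y := dist_comm x y ▸ hq.dist_le_mul y x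
  calc |p x / q x - p y / q y| * |q y|
      = |(p x - p y) + p x / q x * (q y - q x)| := by rw [← abs_mul, ratio_sub_mul]
    _ ≤ |p x - p y| + |p x / q x| * |q y - q x| := by grw [abs_add_le, abs_mul]
    _ ≤ a * dist x y + M * (c * dist x y) := by
        grw [hp_sub, hq_sub, abs_div_le_of_abs_le_mul M.coe_nonneg (hpq x)]
    _ = (a + M * c) * dist x y := by ring

section Seminormed

variable {E : Type*} [SeminormedAddCommGroup E] [NormedSpace ℝ E] {p q : E → ℝ}

lemma lipschitzWith_radialRescale {a b c : ℝ≥0} (hp₀ : p 0 = 0) (hp : LipschitzWith a p)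
    (hq : LipschitzWith c q) (hle : ∀ x, ‖x‖ ≤ b * |q x|) :
    LipschitzWith (a * b * (2 + b * c)) (radialRescale p q) := by
  have hpq (x : E) : |p x| ≤ ↑(a * b) * |q x| :=
    calc |p x| ≤ a * ‖x‖ := hp.norm_le_mul hp₀ x
      _ ≤ a * (b * |q x|) := by grw [hle x]
      _ = ↑(a * b) * |q x| := by push_cast; ring
  refine LipschitzWith.of_dist_le_mul fun x y => ?_
  have ratio_smul_le : ‖(p x / q x) • (x - y)‖ ≤ ↑(a * b) * dist x y := by
    rw [norm_smul, Real.norm_eq_abs, dist_eq_norm]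
    grw [abs_div_le_of_abs_le_mul (a * b).coe_nonneg (hpq x)]
  have ratio_sub_smul_le :
      ‖(p x / q x - p y / q y) • y‖ ≤ b * ((a + ↑(a * b) * c) * dist x y) :=
    calc ‖(p x / q x - p y / q y) • y‖
        ≤ |p x / q x - p y / q y| * (b * |q y|) := by
          grw [norm_smul, Real.norm_eq_abs, hle y]
      _ = b * (|p x / q x - p y / q y| * |q y|) := by ring
      _ ≤ b * ((a + ↑(a * b) * c) * dist x y) := by
          grw [abs_div_sub_div_mul_abs_le hp hq hpq x y]
  calc dist (radialRescale p q x) (radialRescale p q y)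
      = ‖(p x / q x) • (x - y) + (p x / q x - p y / q y) • y‖ := by
        rw [dist_eq_norm, radialRescale, radialRescale]
        congr 1
        module
    _ ≤ ↑(a * b) * dist x y + b * ((a + ↑(a * b) * c) * dist x y) := by
        grw [norm_add_le, ratio_smul_le, ratio_sub_smul_le]
    _ = ↑(a * b * (2 + b * c)) * dist x y := by
        push_cast
        ring

/-- A Lipschitz, positively homogeneous function comparable to the norm, such as the gauge of a
bounded set that is star-shaped about each point of a ball around `0`. It need be neither symmetric
nor subadditive; radial rescaling is bi-Lipschitz between any two such functions. -/
structure IsLipschitzGauge (p : E → ℝ) : Prop where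
  nonneg (x : E) : 0 ≤ p x
  map_smul {t : ℝ} (ht : 0 ≤ t) (x : E) : p (t • x) = t * p x
  exists_lipschitzWith : ∃ K, LipschitzWith K p
  exists_norm_le_mul : ∃ C : ℝ≥0, ∀ x, ‖x‖ ≤ C * p x

namespace IsLipschitzGauge

lemma map_zero (hp : IsLipschitzGauge p) : p 0 = 0 := by
  simpa using hp.map_smul le_rfl 0

lemma eq_zero_iff_norm_eq_zero (hp : IsLipschitzGauge p) {x : E} : p x = 0 ↔ ‖x‖ = 0 := by
  obtain ⟨K, hK⟩ := hp.exists_lipschitzWith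
  obtain ⟨C, hC⟩ := hp.exists_norm_le_mul
  refine ⟨fun h => ?_, fun h => ?_⟩
  · exact le_antisymm (by simpa [h] using hC x) (norm_nonneg x)
  · simpa [h] using hK.norm_le_mul hp.map_zero x

lemma apply_radialRescale (hp : IsLipschitzGauge p) (hq : IsLipschitzGauge q) (x : E) :
    q (radialRescale p q x) = p x := by
  rw [radialRescale, hq.map_smul (div_nonneg (hp.nonneg x) (hq.nonneg x))]
  exact div_mul_cancel_of_imp fun h =>
    hp.eq_zero_iff_norm_eq_zero.2 (hq.eq_zero_iff_norm_eq_zero.1 h)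

lemma mapsTo_radialRescale (hp : IsLipschitzGauge p) (hq : IsLipschitzGauge q) (s : Set ℝ) :
    MapsTo (radialRescale p q) (p ⁻¹' s) (q ⁻¹' s) := fun x hx => by
  rwa [mem_preimage, hp.apply_radialRescale hq]

lemma exists_lipschitzWith_radialRescale (hp : IsLipschitzGauge p) (hq : IsLipschitzGauge q) :
    ∃ K, LipschitzWith K (radialRescale p q) := by
  obtain ⟨a, ha⟩ := hp.exists_lipschitzWith
  obtain ⟨b, hb⟩ := hq.exists_norm_le_mul
  obtain ⟨c, hc⟩ := hq.exists_lipschitzWith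
  exact ⟨_, lipschitzWith_radialRescale hp.map_zero ha hc fun x =>
    (hb x).trans_eq (by rw [abs_of_nonneg (hq.nonneg x)])⟩

end IsLipschitzGauge

lemma isLipschitzGauge_norm : IsLipschitzGauge (fun x : E => ‖x‖) where
  nonneg := norm_nonneg
  map_smul ht x := norm_smul_of_nonneg ht x
  exists_lipschitzWith := ⟨1, lipschitzWith_one_norm⟩
  exists_norm_le_mul := ⟨1, fun x => by simp⟩

end Seminormed

section Normed

variable {E : Type*} [NormedAddCommGroup E] [NormedSpace ℝ E] {p q : E → ℝ}

lemma IsLipschitzGauge.leftInverse_radialRescale (hp : IsLipschitzGauge p)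
    (hq : IsLipschitzGauge q) :
    LeftInverse (radialRescale q p) (radialRescale p q) := fun x => by
  rcases eq_or_ne x 0 with rfl | hx
  · simp [radialRescale]
  have hpx : p x ≠ 0 := by simpa [hp.eq_zero_iff_norm_eq_zero] using hx
  have hqx : q x ≠ 0 := by simpa [hq.eq_zero_iff_norm_eq_zero] using hx
  have hp_apply : p (radialRescale p q x) = p x / q x * p x :=
    hp.map_smul (div_nonneg (hp.nonneg x) (hq.nonneg x)) x
  have factors_cancel : p x / (p x / q x * p x) * (p x / q x) = 1 := by field_simp
  rw [radialRescale, hp.apply_radialRescale hq, hp_apply, radialRescale, smul_smul,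
    factors_cancel, one_smul]

theorem annulus_transformation_biLipschitz_general (hp : IsLipschitzGauge p)
    (hq : IsLipschitzGauge q) (s : Set ℝ) :
    BijOn (radialRescale p q) (p ⁻¹' s) (q ⁻¹' s) ∧
      (∃ K, LipschitzWith K (radialRescale p q)) ∧
      InvOn (radialRescale q p) (radialRescale p q) (p ⁻¹' s) (q ⁻¹' s) ∧
      ∃ K', LipschitzWith K' (radialRescale q p) := by
  have hinv : InvOn (radialRescale q p) (radialRescale p q) (p ⁻¹' s) (q ⁻¹' s) :=
    ⟨(hp.leftInverse_radialRescale hq).leftInvOn _, (hq.leftInverse_radialRescale hp).leftInvOn _⟩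
  exact ⟨hinv.bijOn (hp.mapsTo_radialRescale hq s) (hq.mapsTo_radialRescale hp s),
    hp.exists_lipschitzWith_radialRescale hq, hinv, hq.exists_lipschitzWith_radialRescale hp⟩

end Normed

section EuclideanSpace

variable {ι : Type*} [Fintype ι]

lemma lipschitzWith_sum_abs :
    LipschitzWith (Fintype.card ι) (fun x : EuclideanSpace ℝ ι => ∑ i, |x i|) := by
  refine LipschitzWith.of_dist_le_mul fun x y => ?_
  calc dist (∑ i, |x i|) (∑ i, |y i|)
      ≤ ∑ i, dist |x i| |y i| := dist_sum_sum_le _ _ _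
    _ ≤ ∑ _i : ι, dist x y := by
        gcongr with i
        exact (abs_abs_sub_abs_le (x i) (y i)).trans
          ((PiLp.norm_apply_le (x - y) i).trans_eq (dist_eq_norm x y).symm)
    _ = (Fintype.card ι : ℝ≥0) * dist x y := by simp

lemma norm_le_sum_abs (x : EuclideanSpace ℝ ι) : ‖x‖ ≤ ∑ i, |x i| := by
  have hnonneg : ∀ i ∈ Finset.univ, 0 ≤ |x i| := fun i _ => abs_nonneg _
  rw [EuclideanSpace.norm_eq]
  exact Real.sqrt_le_iff.2
    ⟨Finset.sum_nonneg hnonneg, Finset.sum_sq_le_sq_sum_of_nonneg hnonneg⟩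

lemma isLipschitzGauge_sum_abs :
    IsLipschitzGauge (fun x : EuclideanSpace ℝ ι => ∑ i, |x i|) where
  nonneg x := Finset.sum_nonneg fun i _ => abs_nonneg (x i)
  map_smul ht x := by simp [abs_mul, abs_of_nonneg ht, Finset.mul_sum]
  exists_lipschitzWith := ⟨_, lipschitzWith_sum_abs⟩
  exists_norm_le_mul := ⟨1, fun x => by simpa using norm_le_sum_abs x⟩

end EuclideanSpace

/-- **The annulus transformation is bi-Lipschitz.**
Let `n ≥ 2`, let `Â = { x : 1/2 < ‖x‖₁ < 1 }` be the parametric (Manhattan)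
annulus and `Ă = { x : 1/2 < ‖x‖₂ < 1 }` the physical (Euclidean) annulus.
Then `Φ(x) = (‖x‖₁/‖x‖₂) • x` is a bijection of `Â` onto `Ă`, `Φ` is Lipschitz
on `Â`, and it has an inverse that is Lipschitz on `Ă`; in particular `Φ` is a
bi-Lipschitz homeomorphism of the annuli. -/
theorem annulus_transformation_biLipschitz (n : ℕ) (hn : 2 ≤ n) :
    Set.BijOn
        (fun x : EuclideanSpace ℝ (Fin n) => ((∑ i, |x i|) / ‖x‖) • x)
        {x : EuclideanSpace ℝ (Fin n) | 1 / 2 < ∑ i, |x i| ∧ ∑ i, |x i| < 1}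
        {x : EuclideanSpace ℝ (Fin n) | 1 / 2 < ‖x‖ ∧ ‖x‖ < 1} ∧
      (∃ K : NNReal,
        LipschitzOnWith K
          (fun x : EuclideanSpace ℝ (Fin n) => ((∑ i, |x i|) / ‖x‖) • x)
          {x : EuclideanSpace ℝ (Fin n) | 1 / 2 < ∑ i, |x i| ∧ ∑ i, |x i| < 1}) ∧
      ∃ g : EuclideanSpace ℝ (Fin n) → EuclideanSpace ℝ (Fin n),
        Set.InvOn g
          (fun x : EuclideanSpace ℝ (Fin n) => ((∑ i, |x i|) / ‖x‖) • x)
          {x : EuclideanSpace ℝ (Fin n) | 1 / 2 < ∑ i, |x i| ∧ ∑ i, |x i| < 1}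
          {x : EuclideanSpace ℝ (Fin n) | 1 / 2 < ‖x‖ ∧ ‖x‖ < 1} ∧
        ∃ K' : NNReal,
          LipschitzOnWith K' g
            {x : EuclideanSpace ℝ (Fin n) | 1 / 2 < ‖x‖ ∧ ‖x‖ < 1} := by
  obtain ⟨hbij, ⟨K, hK⟩, hinv, K', hK'⟩ := annulus_transformation_biLipschitz_general
    isLipschitzGauge_sum_abs (isLipschitzGauge_norm (E := EuclideanSpace ℝ (Fin n))) (Ioo (1 / 2) 1)
  exact ⟨hbij, ⟨K, hK.lipschitzOnWith⟩, _, hinv, K', hK'.lipschitzOnWith⟩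
end
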